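/- arXiv:cs/0011023 — 9 statements merged into one kernel-verified Lean document; each statement's English description precedes it below -/
import Mathlib

section
/- Let s(v) = (81/2)·v/(2 − 3v) and h(x,y,z) = s(|x−y| + |y−z| + |z−x|). Then h(x,y,z) ≥ 0 for all (x,y,z) in the cube C = [0,1/3]^3, and the Lebesgue integral of h over C equals 1; that is, h is a joint probability density function on C. -/
open MeasureTheory

noncomputable section

/-- The density as a function of the range. -/
def gR (r : ℝ) : ENNReal := ENNReal.ofReal ((81 / 2) * r / (1 - 3 * r))

/-- The density restricted to the ordered region: coordinates are (min, max, middle). -/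
def fR (p : ℝ × ℝ × ℝ) : ENNReal :=
  if 0 ≤ p.1 ∧ p.1 < p.2.2 ∧ p.2.2 < p.2.1 ∧ p.2.1 ≤ 1 / 3 then gR (p.2.1 - p.1) else 0

lemma gR_meas : Measurable gR := by
  unfold gR; fun_prop

lemma fR_meas : Measurable fR := by
  unfold fR
  refine Measurable.ite ?_ (gR_meas.comp (by fun_prop)) measurable_const
  have a1 : MeasurableSet {p : ℝ × ℝ × ℝ | 0 ≤ p.1} :=
    measurableSet_le (by fun_prop) (by fun_prop)
  have a2 : MeasurableSet {p : ℝ × ℝ × ℝ | p.1 < p.2.2} :=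
    measurableSet_lt (by fun_prop) (by fun_prop)
  have a3 : MeasurableSet {p : ℝ × ℝ × ℝ | p.2.2 < p.2.1} :=
    measurableSet_lt (by fun_prop) (by fun_prop)
  have a4 : MeasurableSet {p : ℝ × ℝ × ℝ | p.2.1 ≤ 1 / 3} :=
    measurableSet_le (by fun_prop) (by fun_prop)
  exact a1.inter (a2.inter (a3.inter a4))

lemma fR_y (x z : ℝ) : ∫⁻ y, fR (x, z, y) =
    if 0 ≤ x ∧ z ≤ 1 / 3 then gR (z - x) * ENNReal.ofReal (z - x) else 0 := by
  split_ifs with hc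
  · have : (fun y => fR (x, z, y)) = (Set.Ioo x z).indicator (fun _ => gR (z - x)) := by
      ext y
      simp only [fR, Set.indicator, Set.mem_Ioo]
      congr 1
      simp only [eq_iff_iff]; tauto
    rw [this, lintegral_indicator measurableSet_Ioo, setLIntegral_const, Real.volume_Ioo]
  · have : (fun y => fR (x, z, y)) = fun _ => 0 := by
      ext y
      simp only [fR]
      rw [if_neg]; tauto
    rw [this, lintegral_zero]

lemma fR_int : ∫⁻ p, fR p = ENNReal.ofReal (1 / 6) := by
  have e1 : ∫⁻ p, fR p = ∫⁻ x, ∫⁻ z, ∫⁻ y, fR (x, z, y) := by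
    rw [Measure.volume_eq_prod, lintegral_prod _ fR_meas.aemeasurable]
    refine lintegral_congr fun x => ?_
    rw [Measure.volume_eq_prod, lintegral_prod]
    exact (fR_meas.comp (by fun_prop)).aemeasurable
  have e2 : ∀ x : ℝ, ∫⁻ z, ∫⁻ y, fR (x, z, y) =
      ∫⁻ r, if 0 ≤ x ∧ x ≤ 1 / 3 - r then gR r * ENNReal.ofReal r else 0 := by
    intro x
    rw [← lintegral_add_right_eq_self _ x]
    refine lintegral_congr fun r => ?_
    rw [fR_y, add_sub_cancel_right]
    congr 1
    simp only [eq_iff_iff]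
    constructor <;> rintro ⟨h1, h2⟩ <;> exact ⟨h1, by linarith⟩
  have e3 : ∀ r : ℝ, (∫⁻ x : ℝ, if 0 ≤ x ∧ x ≤ 1 / 3 - r then gR r * ENNReal.ofReal r else 0) =
      gR r * ENNReal.ofReal r * ENNReal.ofReal (1 / 3 - r) := by
    intro r
    have : (fun x : ℝ => if 0 ≤ x ∧ x ≤ 1 / 3 - r then gR r * ENNReal.ofReal r else 0)
        = (Set.Icc 0 (1 / 3 - r)).indicator (fun _ => gR r * ENNReal.ofReal r) := by
      ext x; simp only [Set.indicator, Set.mem_Icc]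
    rw [this, lintegral_indicator measurableSet_Icc, setLIntegral_const, Real.volume_Icc, sub_zero]
  have e4 : ∀ r : ℝ, gR r * ENNReal.ofReal r * ENNReal.ofReal (1 / 3 - r) =
      (Set.Ioo (0 : ℝ) (1 / 3)).indicator (fun r => ENNReal.ofReal (27 / 2 * r ^ 2)) r := by
    intro r
    by_cases hr : r ∈ Set.Ioo (0 : ℝ) (1 / 3)
    · rw [Set.indicator_of_mem hr]
      obtain ⟨h0, h1⟩ := hr
      have h2 : 0 < 1 - 3 * r := by linarith
      rw [gR, ← ENNReal.ofReal_mul (by positivity), ← ENNReal.ofReal_mul (by positivity)]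
      congr 1
      have h3 : 1 - r * 3 ≠ 0 := by intro hc; linarith
      rw [show 1 / 3 - r = (1 - 3 * r) / 3 by ring]
      field_simp
      norm_num [mul_div_cancel_right₀ _ h3]
    · rw [Set.indicator_of_notMem hr]
      rcases le_or_gt r 0 with h0 | h0
      · simp [ENNReal.ofReal_of_nonpos h0]
      · have : 1 / 3 - r ≤ 0 := by
          by_contra hc; exact hr ⟨h0, by linarith⟩
        rw [ENNReal.ofReal_of_nonpos this, mul_zero]
  rw [e1, lintegral_congr e2, lintegral_lintegral_swap, lintegral_congr e3, lintegral_congr e4,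
    lintegral_indicator measurableSet_Ioo, ← ofReal_integral_eq_lintegral_ofReal]
  · congr 1
    rw [← integral_Ioc_eq_integral_Ioo, ← intervalIntegral.integral_of_le (by norm_num)]
    rw [intervalIntegral.integral_const_mul, integral_pow]
    norm_num
  · refine IntegrableOn.mono_set (t := Set.Icc (0 : ℝ) (1 / 3)) ?_ Set.Ioo_subset_Icc_self
    exact (by fun_prop : Continuous fun r : ℝ => 27 / 2 * r ^ 2).continuousOn.integrableOn_Icc
  · exact Filter.Eventually.of_forall fun r => by positivity
  · refine Measurable.aemeasurable ?_
    simp only [Function.uncurry_def]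
    refine Measurable.ite ?_ ((gR_meas.comp measurable_snd).mul (by fun_prop)) measurable_const
    have a1 : MeasurableSet {p : ℝ × ℝ | 0 ≤ p.1} :=
      measurableSet_le (by fun_prop) (by fun_prop)
    have a2 : MeasurableSet {p : ℝ × ℝ | p.1 ≤ 1 / 3 - p.2} :=
      measurableSet_le (by fun_prop) (by fun_prop)
    exact a1.inter a2

lemma mp_s1 : MeasurePreserving (fun p : ℝ × ℝ × ℝ => (p.1, p.2.2, p.2.1)) := by
  exact (MeasurePreserving.id (volume : Measure ℝ)).prod
    (Measure.measurePreserving_swap (μ := (volume : Measure ℝ)) (ν := (volume : Measure ℝ)))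

lemma mp_c : MeasurePreserving (fun p : ℝ × ℝ × ℝ => (p.2.1, p.2.2, p.1)) := by
  have h1 : MeasurePreserving (fun p : ℝ × (ℝ × ℝ) => p.swap) :=
    Measure.measurePreserving_swap (μ := (volume : Measure ℝ)) (ν := (volume : Measure (ℝ × ℝ)))
  have h2 : MeasurePreserving (MeasurableEquiv.prodAssoc : (ℝ × ℝ) × ℝ ≃ᵐ ℝ × ℝ × ℝ) :=
    measurePreserving_prodAssoc volume volume volume
  exact h2.comp h1

lemma ker_null (L : ℝ × ℝ × ℝ →ₗ[ℝ] ℝ) (v : ℝ × ℝ × ℝ) (hv : L v ≠ 0) :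
    ∀ᵐ p : ℝ × ℝ × ℝ, L p ≠ 0 := by
  haveI i2 : (volume : Measure (ℝ × ℝ)).IsAddHaarMeasure :=
    inferInstanceAs ((volume : Measure ℝ).prod (volume : Measure ℝ)).IsAddHaarMeasure
  haveI i3 : (volume : Measure (ℝ × ℝ × ℝ)).IsAddHaarMeasure :=
    inferInstanceAs ((volume : Measure ℝ).prod (volume : Measure (ℝ × ℝ))).IsAddHaarMeasure
  have := Measure.addHaar_submodule (volume : Measure (ℝ × ℝ × ℝ)) (LinearMap.ker L) (by
    intro ht
    exact hv (by rw [← LinearMap.mem_ker, ht]; trivial))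
  rw [ae_iff]
  convert this using 2
  ext p; simp

lemma ae_distinct : ∀ᵐ p : ℝ × ℝ × ℝ, p.1 ≠ p.2.1 ∧ p.2.1 ≠ p.2.2 ∧ p.1 ≠ p.2.2 := by
  let a : ℝ × ℝ × ℝ →ₗ[ℝ] ℝ := LinearMap.fst ℝ ℝ (ℝ × ℝ)
  let b : ℝ × ℝ × ℝ →ₗ[ℝ] ℝ := LinearMap.fst ℝ ℝ ℝ ∘ₗ LinearMap.snd ℝ ℝ (ℝ × ℝ)
  let c : ℝ × ℝ × ℝ →ₗ[ℝ] ℝ := LinearMap.snd ℝ ℝ ℝ ∘ₗ LinearMap.snd ℝ ℝ (ℝ × ℝ)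
  filter_upwards [ker_null (a - b) (1, 0, 0) (by simp [a, b]),
    ker_null (b - c) (0, 1, 0) (by simp [b, c]),
    ker_null (a - c) (1, 0, 0) (by simp [a, c])] with p h1 h2 h3
  refine ⟨fun h => h1 ?_, fun h => h2 ?_, fun h => h3 ?_⟩
  · simp [a, b, h]
  · simp [b, c, h]
  · simp [a, c, h]

lemma range_eq {x z : ℝ} {v : ℝ} (hv : v = 2 * (z - x)) :
    ENNReal.ofReal ((81 / 2) * v / (2 - 3 * v)) = gR (z - x) := by
  rw [gR, hv]
  congr 1
  rw [show 2 - 3 * (2 * (z - x)) = 2 * (1 - 3 * (z - x)) by ring,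
    show (81 / 2) * (2 * (z - x)) = 2 * ((81 / 2) * (z - x)) by ring]
  exact mul_div_mul_left _ _ two_ne_zero

lemma fR_pos {x y z : ℝ} (h1 : x < y) (h2 : y < z) :
    fR (x, z, y) = if 0 ≤ x ∧ z ≤ 1 / 3 then gR (z - x) else 0 := by
  simp [fR, h1, h2]

lemma fR_neg {x y z : ℝ} (h : y < x ∨ z < y) : fR (x, z, y) = 0 := by
  rw [fR, if_neg]
  rintro ⟨-, h1, h2, -⟩
  simp only at h1 h2
  rcases h with h | h <;> linarith

lemma decomp (x y z : ℝ) (h1 : x ≠ y) (h2 : y ≠ z) (h3 : x ≠ z) :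
    (if (0 ≤ x ∧ x ≤ 1 / 3) ∧ (0 ≤ y ∧ y ≤ 1 / 3) ∧ (0 ≤ z ∧ z ≤ 1 / 3) then
      ENNReal.ofReal ((81 / 2) * (|x - y| + |y - z| + |z - x|) /
        (2 - 3 * (|x - y| + |y - z| + |z - x|))) else 0) =
    fR (x, y, z) + fR (x, z, y) + fR (y, z, x) + fR (y, x, z) + fR (z, x, y) + fR (z, y, x) := by
  have key : ∀ a b c : ℝ, a < b → b < c → 
      (|x - y| + |y - z| + |z - x| = 2 * (c - a)) →
      (((0 ≤ x ∧ x ≤ 1 / 3) ∧ (0 ≤ y ∧ y ≤ 1 / 3) ∧ (0 ≤ z ∧ z ≤ 1 / 3)) ↔ (0 ≤ a ∧ c ≤ 1 / 3)) →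
      (if (0 ≤ x ∧ x ≤ 1 / 3) ∧ (0 ≤ y ∧ y ≤ 1 / 3) ∧ (0 ≤ z ∧ z ≤ 1 / 3) then
      ENNReal.ofReal ((81 / 2) * (|x - y| + |y - z| + |z - x|) /
        (2 - 3 * (|x - y| + |y - z| + |z - x|))) else 0) = fR (a, c, b) := by
    intro a b c hab hbc hv hiff
    rw [fR_pos hab hbc, range_eq hv]
    simp only [hiff]
  rcases lt_or_gt_of_ne h1 with h1 | h1 <;> rcases lt_or_gt_of_ne h2 with h2 | h2 <;>
    rcases lt_or_gt_of_ne h3 with h3 | h3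
  · rw [key x y z h1 h2 (by grind) (by grind)]
    simp [fR_neg, h1, h2, h3]
  · linarith
  · rw [key x z y h3 h2 (by grind) (by grind)]
    simp [fR_neg, h1, h2, h3]
  · rw [key z x y h3 h1 (by grind) (by grind)]
    simp [fR_neg, h1, h2, h3]
  · rw [key y x z h1 h3 (by grind) (by grind)]
    simp [fR_neg, h1, h2, h3]
  · rw [key y z x h2 h3 (by grind) (by grind)]
    simp [fR_neg, h1, h2, h3]
  · linarith
  · rw [key z y x h2 h1 (by grind) (by grind)]
    simp [fR_neg, h1, h2, h3]

lemma total : ∫⁻ p : ℝ × ℝ × ℝ, (fR (p.1, p.2.1, p.2.2) + fR (p.1, p.2.2, p.2.1)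
      + fR (p.2.1, p.2.2, p.1) + fR (p.2.1, p.1, p.2.2)
      + fR (p.2.2, p.1, p.2.1) + fR (p.2.2, p.2.1, p.1)) = 1 := by
  have m : ∀ {t : ℝ × ℝ × ℝ → ℝ × ℝ × ℝ}, Measurable t → Measurable fun p => fR (t p) :=
    fun ht => fR_meas.comp ht
  have i : ∀ (t : ℝ × ℝ × ℝ → ℝ × ℝ × ℝ), MeasurePreserving t →
      ∫⁻ p, fR (t p) = ENNReal.ofReal (1 / 6) := 
    fun t ht => (ht.lintegral_comp fR_meas).trans fR_int
  rw [lintegral_add_right _ (m (by fun_prop)), lintegral_add_right _ (m (by fun_prop)),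
    lintegral_add_right _ (m (by fun_prop)), lintegral_add_right _ (m (by fun_prop)),
    lintegral_add_right _ (m (by fun_prop))]
  rw [i (fun p => (p.1, p.2.1, p.2.2)) (MeasurePreserving.id _), i _ mp_s1, i _ mp_c,
    i (fun p => (p.2.1, p.1, p.2.2)) (mp_s1.comp mp_c),
    i (fun p => (p.2.2, p.1, p.2.1)) (mp_c.comp mp_c),
    i (fun p => (p.2.2, p.2.1, p.1)) (mp_s1.comp (mp_c.comp mp_c))]
  rw [← ENNReal.ofReal_add, ← ENNReal.ofReal_add, ← ENNReal.ofReal_add, ← ENNReal.ofReal_add,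
    ← ENNReal.ofReal_add] <;> norm_num

end

/-- With `s(v) = (81/2)·v/(2 − 3v)` and `h(x,y,z) = s(|x−y| + |y−z| + |z−x|)`,
`h` is nonnegative on the cube `C = [0,1/3]³` and its Lebesgue integral over `C`
equals `1`; that is, `h` is a joint probability density function on `C`. -/
theorem stmt_1
    (s : ℝ → ℝ) (hs : ∀ v, s v = (81 / 2) * v / (2 - 3 * v))
    (h : ℝ → ℝ → ℝ → ℝ)
    (hh : ∀ x y z, h x y z = s (|x - y| + |y - z| + |z - x|)) :
    (∀ x y z, x ∈ Set.Icc (0 : ℝ) (1 / 3) → y ∈ Set.Icc (0 : ℝ) (1 / 3) →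
      z ∈ Set.Icc (0 : ℝ) (1 / 3) → 0 ≤ h x y z) ∧
    ∫ p in (Set.Icc (0 : ℝ) (1 / 3) ×ˢ Set.Icc (0 : ℝ) (1 / 3) ×ˢ Set.Icc (0 : ℝ) (1 / 3)),
      h p.1 p.2.1 p.2.2 = 1 := by
  have nonneg : ∀ x y z, x ∈ Set.Icc (0 : ℝ) (1 / 3) → y ∈ Set.Icc (0 : ℝ) (1 / 3) →
      z ∈ Set.Icc (0 : ℝ) (1 / 3) → 0 ≤ h x y z := by
    rintro x y z ⟨hx0, hx1⟩ ⟨hy0, hy1⟩ ⟨hz0, hz1⟩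
    rw [hh, hs]
    have : |x - y| + |y - z| + |z - x| ≤ 2 / 3 := by grind
    exact div_nonneg (by positivity) (by linarith)
  refine ⟨nonneg, ?_⟩
  have hC : MeasurableSet (Set.Icc (0 : ℝ) (1 / 3) ×ˢ Set.Icc (0 : ℝ) (1 / 3) ×ˢ
      Set.Icc (0 : ℝ) (1 / 3)) :=
    measurableSet_Icc.prod (measurableSet_Icc.prod measurableSet_Icc)
  rw [integral_eq_lintegral_of_nonneg_ae]
  · rw [← lintegral_indicator hC]
    have : ∫⁻ p, (Set.Icc (0 : ℝ) (1 / 3) ×ˢ Set.Icc (0 : ℝ) (1 / 3) ×ˢ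
        Set.Icc (0 : ℝ) (1 / 3)).indicator (fun p => ENNReal.ofReal (h p.1 p.2.1 p.2.2)) p = 1 := by
      rw [← total]
      refine lintegral_congr_ae ?_
      filter_upwards [ae_distinct] with p hp
      rw [← decomp p.1 p.2.1 p.2.2 hp.1 hp.2.1 hp.2.2]
      simp only [Set.indicator, Set.mem_prod, Set.mem_Icc, hh, hs]
    rw [this, ENNReal.toReal_one]
  · exact (ae_restrict_iff' hC).2 (Filter.Eventually.of_forall fun p hp =>
      nonneg _ _ _ hp.1 hp.2.1 hp.2.2)
  · refine Measurable.aestronglyMeasurable ?_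
    simp only [hh, hs]
    fun_prop
end

section
/- Let s(v) = (81/2)·v/(2 − 3v) and h(x,y,z) = s(|x−y| + |y−z| + |z−x|) on [0,1/3]^3. For all real x, y with 0 < y ≤ x < 1/3, the integral ∫_0^{1/3} h(x,y,z) dz equals (9/2)·( 2·ln(1 − 3(x−y)) − ln(3y·(1 − 3x)) − (1 − 6(x−y))/(1 − 3(x−y)) ). -/
open MeasureTheory

/-- With `s(v) = (81/2)·v/(2 − 3v)` and `h(x,y,z) = s(|x−y| + |y−z| + |z−x|)` on `[0,1/3]³`:
for all reals `x, y` with `0 < y ≤ x < 1/3`, the integral `∫_0^{1/3} h(x,y,z) dz`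
equals `(9/2)·(2·ln(1 − 3(x−y)) − ln(3y·(1 − 3x)) − (1 − 6(x−y))/(1 − 3(x−y)))`. -/
theorem stmt_2
    (s : ℝ → ℝ) (hs : ∀ v, s v = (81 / 2) * v / (2 - 3 * v))
    (h : ℝ → ℝ → ℝ → ℝ)
    (hh : ∀ x y z, h x y z = s (|x - y| + |y - z| + |z - x|))
    (x y : ℝ) (hy : 0 < y) (hyx : y ≤ x) (hx : x < 1 / 3) :
    ∫ z in (0 : ℝ)..(1 / 3), h x y z
      = (9 / 2) * (2 * Real.log (1 - 3 * (x - y)) - Real.log (3 * y * (1 - 3 * x))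
          - (1 - 6 * (x - y)) / (1 - 3 * (x - y))) := by
  have hfun : h x y = fun z => (81 / 2) * (|x - y| + |y - z| + |z - x|) /
      (2 - 3 * (|x - y| + |y - z| + |z - x|)) := by
    funext z; rw [hh, hs]
  have hxy : |x - y| = x - y := abs_of_nonneg (by linarith)
  have hcont : ContinuousOn (h x y) (Set.Icc 0 (1 / 3)) := by
    rw [hfun]
    refine ContinuousOn.div (by fun_prop) (by fun_prop) ?_
    intro z hz
    obtain ⟨h0, h1⟩ := hz
    rw [hxy]
    rcases abs_cases (y - z) with ⟨e1, _⟩ | ⟨e1, _⟩ <;>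
    rcases abs_cases (z - x) with ⟨e2, _⟩ | ⟨e2, _⟩ <;>
    rw [e1, e2] <;> apply ne_of_gt <;> linarith
  have hint : ∀ a b : ℝ, 0 ≤ a → a ≤ b → b ≤ 1 / 3 →
      IntervalIntegrable (h x y) volume a b := by
    intro a b ha hab hb
    apply ContinuousOn.intervalIntegrable
    rw [Set.uIcc_of_le hab]
    exact hcont.mono (Set.Icc_subset_Icc ha hb)
  have hd : 0 < 1 - 3 * (x - y) := by linarith
  have i1 : ∫ z in (0 : ℝ)..y, h x y z
      = (81 / 2) * (-y / 3 + 1 / 9 * Real.log (1 - 3 * (x - y)))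
        - (81 / 2) * (1 / 9 * Real.log (1 - 3 * x)) := by
    have := intervalIntegral.integral_eq_sub_of_hasDerivAt (a := 0) (b := y)
      (f := fun z => (81 / 2) * (-z / 3 + 1 / 9 * Real.log (1 - 3 * (x - z))))
      (f' := h x y) ?_ (hint 0 y le_rfl hy.le (by linarith))
    · rw [this]; simp
    · intro z hz
      rw [Set.uIcc_of_le hy.le] at hz
      obtain ⟨h0, h1⟩ := hz
      have hp : 0 < 1 - 3 * (x - z) := by linarith
      have hl : HasDerivAt (fun z : ℝ => 1 - 3 * (x - z)) 3 z := by
        have := (((hasDerivAt_id z).const_sub x).const_mul 3).const_sub 1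
        refine HasDerivAt.congr_deriv this ?_
        norm_num
      have := ((((hasDerivAt_id z).neg.div_const 3).add
        ((hl.log hp.ne').const_mul (1 / 9))).const_mul (81 / 2))
      refine HasDerivAt.congr_deriv this ?_
      symm
      rw [hh, hs, hxy, abs_of_nonneg (by linarith : 0 ≤ y - z),
        abs_of_nonpos (by linarith : z - x ≤ 0)]
      have e : 2 - 3 * (x - y + (y - z) + -(z - x)) = 2 * (1 - 3 * (x - z)) := by ring
      rw [e]
      field_simp
      ring
  have i3 : ∫ z in x..(1 / 3), h x y z
      = (81 / 2) * (-(1 / 3) / 3 - 1 / 9 * Real.log (3 * y))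
        - (81 / 2) * (-x / 3 - 1 / 9 * Real.log (1 - 3 * (x - y))) := by
    have := intervalIntegral.integral_eq_sub_of_hasDerivAt (a := x) (b := 1 / 3)
      (f := fun z => (81 / 2) * (-z / 3 - 1 / 9 * Real.log (1 - 3 * (z - y))))
      (f' := h x y) ?_ (hint x (1 / 3) (by linarith) hx.le le_rfl)
    · rw [this]
      have e : 1 - 3 * (1 / 3 - y) = 3 * y := by ring
      simp only [e]
    · intro z hz
      rw [Set.uIcc_of_le hx.le] at hz
      obtain ⟨h0, h1⟩ := hz
      have hp : 0 < 1 - 3 * (z - y) := by linarith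
      have hl : HasDerivAt (fun z : ℝ => 1 - 3 * (z - y)) (-3) z := by
        have := (((hasDerivAt_id z).sub_const y).const_mul 3).const_sub 1
        refine HasDerivAt.congr_deriv this ?_
        norm_num
      have := ((((hasDerivAt_id z).neg.div_const 3).sub
        ((hl.log hp.ne').const_mul (1 / 9))).const_mul (81 / 2))
      refine HasDerivAt.congr_deriv this ?_
      symm
      rw [hh, hs, hxy, abs_of_nonpos (by linarith : y - z ≤ 0),
        abs_of_nonneg (by linarith : 0 ≤ z - x)]
      have e : 2 - 3 * (x - y + -(y - z) + (z - x)) = 2 * (1 - 3 * (z - y)) := by ring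
      rw [e]
      field_simp
      ring
  have i2 : ∫ z in y..x, h x y z
      = (x - y) * ((81 / 2) * (x - y) / (1 - 3 * (x - y))) := by
    have : ∫ z in y..x, h x y z
        = ∫ _z in y..x, ((81 / 2) * (x - y) / (1 - 3 * (x - y))) := by
      apply intervalIntegral.integral_congr
      intro z hz
      rw [Set.uIcc_of_le hyx] at hz
      obtain ⟨h0, h1⟩ := hz
      show h x y z = (81 / 2) * (x - y) / (1 - 3 * (x - y))
      rw [hh, hs, hxy, abs_of_nonpos (by linarith : y - z ≤ 0),
        abs_of_nonpos (by linarith : z - x ≤ 0)]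
      have e : 2 - 3 * (x - y + -(y - z) + -(z - x)) = 2 * (1 - 3 * (x - y)) := by ring
      rw [e]
      field_simp
      ring
    rw [this, intervalIntegral.integral_const, smul_eq_mul]
  have I1 := hint 0 y le_rfl hy.le (by linarith)
  have I2 := hint y x hy.le hyx hx.le
  have I3 := hint x (1 / 3) (by linarith) hx.le le_rfl
  rw [← intervalIntegral.integral_add_adjacent_intervals (I1.trans I2) I3,
    ← intervalIntegral.integral_add_adjacent_intervals I1 I2, i1, i2, i3,
    Real.log_mul (by positivity : 3 * y ≠ 0) (by linarith : 0 < 1 - 3 * x).ne']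
  generalize Real.log (1 - 3 * (x - y)) = A
  generalize Real.log (3 * y) = B
  generalize Real.log (1 - 3 * x) = C
  field_simp
  ring
end

section
/- Define r(u,v) = (9/2)·( 2·ln(1 − 3(u−v)) − ln(3v·(1 − 3u)) − (1 − 6(u−v))/(1 − 3(u−v)) ) for 0 < v ≤ u < 1/3. Then for every t ∈ [1/3, 2/3], the double integral ∫_{t−1/3}^{1/3} ∫_0^{u−t+1/3} r(u,v) dv du equals 1 − (3/2)·t. -/
open MeasureTheory

lemma aux_int (c d a b : ℝ) (hd : d ≠ 0) :
    IntervalIntegrable (fun x => Real.log (c + d * x)) volume a b := by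
  have h := (intervalIntegral.intervalIntegrable_log' (a := c + d * a) (b := c + d * b)).comp_add_left c
  have h2 := h.comp_mul_left (c := d)
  simpa [hd] using h2

lemma aux_L (c d x : ℝ) (h : c + d * x ≠ 0) :
    HasDerivAt (fun x => (c + d * x) * Real.log (c + d * x)) (d * (Real.log (c + d * x) + 1)) x := by
  have h1 : HasDerivAt (fun x : ℝ => c + d * x) d x := by
    simpa using ((hasDerivAt_id x).const_mul d).const_add c
  have h2 := (Real.hasDerivAt_mul_log h).comp x h1
  refine HasDerivAt.congr_deriv h2 ?_
  ring

lemma aux_log (c d x : ℝ) (h : c + d * x ≠ 0) :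
    HasDerivAt (fun x => Real.log (c + d * x)) (d / (c + d * x)) x := by
  have h1 : HasDerivAt (fun x : ℝ => c + d * x) d x := by
    simpa using ((hasDerivAt_id x).const_mul d).const_add c
  exact h1.log h

lemma aux_aff (c d x : ℝ) : HasDerivAt (fun x : ℝ => c + d * x) d x := by
  simpa using ((hasDerivAt_id x).const_mul d).const_add c

lemma aux_cL (c d : ℝ) : Continuous (fun x => (c + d * x) * Real.log (c + d * x)) :=
  Real.continuous_mul_log.comp (by fun_prop : Continuous fun x : ℝ => c + d * x)

lemma inner_int (s u : ℝ) (hsu : s < u) (hu : u < 1 / 3) :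
    ∫ v in (0 : ℝ)..(u - s), (9 / 2) * (2 * Real.log ((1 - 3 * u) + 3 * v)
        - (Real.log (0 + 3 * v) + Real.log (1 - 3 * u)) - (2 - 1 / ((1 - 3 * u) + 3 * v)))
      = (3 / 2) * (2 * ((1 - 3 * s) * Real.log (1 - 3 * s)) + Real.log (1 - 3 * s) - 9 * (u - s)
        - (-3 * s + 3 * u) * Real.log (-3 * s + 3 * u)
        - (1 + (-3) * u) * Real.log (1 + (-3) * u)
        - (2 - 3 * s) * Real.log (1 + (-3) * u)) := by
  have hpos : ∀ v, 0 ≤ v → 0 < (1 - 3 * u) + 3 * v := fun v hv => by linarith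
  rw [intervalIntegral.integral_eq_sub_of_hasDerivAt_of_le (f := fun v =>
    (9 / 2) * ((2 / 3) * (((1 - 3 * u) + 3 * v) * Real.log ((1 - 3 * u) + 3 * v))
      - (1 / 3) * ((0 + 3 * v) * Real.log (0 + 3 * v))
      + (1 / 3) * Real.log ((1 - 3 * u) + 3 * v) + (0 + (-3 - Real.log (1 - 3 * u)) * v)))
    (by linarith)]
  · have e1 : (1 - 3 * u) + 3 * (u - s) = 1 - 3 * s := by ring
    have e2 : 0 + 3 * (u - s) = -3 * s + 3 * u := by ring
    have e3 : 1 + (-3) * u = 1 - 3 * u := by ring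
    simp only [e1, e2, e3, mul_zero, add_zero, zero_mul]
    ring
  · have c1 := aux_cL (1 - 3 * u) 3
    have c2 := aux_cL 0 3
    have c3 : ContinuousOn (fun v => Real.log ((1 - 3 * u) + 3 * v)) (Set.Icc 0 (u - s)) :=
      ContinuousOn.log (by fun_prop) (fun v hv => (hpos v hv.1).ne')
    have c4 : Continuous (fun v : ℝ => 0 + (-3 - Real.log (1 - 3 * u)) * v) := by fun_prop
    exact continuousOn_const.mul ((((continuousOn_const.mul c1.continuousOn).sub
      (continuousOn_const.mul c2.continuousOn)).add (continuousOn_const.mul c3)).add c4.continuousOn)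
  · intro v hv
    have h1 := (hpos v hv.1.le).ne'
    have h2 : 0 + 3 * v ≠ 0 := by have := hv.1; positivity
    have := ((((((aux_L (1 - 3 * u) 3 v h1).const_mul (2 / 3)).sub
      ((aux_L 0 3 v h2).const_mul (1 / 3))).add ((aux_log (1 - 3 * u) 3 v h1).const_mul (1 / 3))).add
      (aux_aff 0 (-3 - Real.log (1 - 3 * u)) v))).const_mul (9 / 2)
    refine HasDerivAt.congr_deriv this ?_
    field_simp
    ring
  · apply IntervalIntegrable.const_mul
    refine (((aux_int _ 3 _ _ (by norm_num)).const_mul 2).sub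
      ((aux_int 0 3 _ _ (by norm_num)).add intervalIntegrable_const)).sub
      (intervalIntegrable_const.sub ?_)
    apply ContinuousOn.intervalIntegrable_of_Icc (by linarith)
    exact ContinuousOn.div continuousOn_const (by fun_prop) (fun v hv => (hpos v hv.1).ne')

lemma outer_int (s : ℝ) (hs1 : s ≤ 1 / 3) :
    ∫ u in s..(1 / 3),
      (3 / 2) * (2 * ((1 - 3 * s) * Real.log (1 - 3 * s)) + Real.log (1 - 3 * s) - 9 * (u - s)
        - (-3 * s + 3 * u) * Real.log (-3 * s + 3 * u)
        - (1 + (-3) * u) * Real.log (1 + (-3) * u)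
        - (2 - 3 * s) * Real.log (1 + (-3) * u)) = 1 / 2 - (3 / 2) * s := by
  have c1 := aux_cL (-3 * s) 3
  have c2 := aux_cL 1 (-3)
  rw [intervalIntegral.integral_eq_sub_of_hasDerivAt_of_le (f := fun u =>
    (3 / 2) * ((0 + (2 * ((1 - 3 * s) * Real.log (1 - 3 * s)) + Real.log (1 - 3 * s)) * u)
      - (1 / 2) * ((-3 * s + 3 * u) * (-3 * s + 3 * u))
      - (1 / 6) * ((-3 * s + 3 * u) * ((-3 * s + 3 * u) * Real.log (-3 * s + 3 * u)))
      + (1 / 12) * ((-3 * s + 3 * u) * (-3 * s + 3 * u))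
      + (1 / 6) * ((1 + (-3) * u) * ((1 + (-3) * u) * Real.log (1 + (-3) * u)))
      - (1 / 12) * ((1 + (-3) * u) * (1 + (-3) * u))
      + ((2 - 3 * s) / 3) * ((1 + (-3) * u) * Real.log (1 + (-3) * u) - (1 + (-3) * u))))
    hs1]
  · have e1 : -3 * s + 3 * (1 / 3) = 1 - 3 * s := by ring
    have e2 : -3 * s + 3 * s = 0 := by ring
    have e3 : (1 : ℝ) + (-3) * (1 / 3) = 0 := by ring
    have e4 : 1 + (-3) * s = 1 - 3 * s := by ring
    simp only [e1, e2, e3, e4]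
    ring
  · apply Continuous.continuousOn
    fun_prop
  · intro u hu
    have h1 : -3 * s + 3 * u ≠ 0 := by have := hu.1; intro h; linarith
    have h2 : 1 + (-3) * u ≠ 0 := by have := hu.2; intro h; linarith
    have a1 := aux_aff (-3 * s) 3 u
    have a2 := aux_aff 1 (-3) u
    have l1 := aux_L (-3 * s) 3 u h1
    have l2 := aux_L 1 (-3) u h2
    have := ((((((((aux_aff 0 (2 * ((1 - 3 * s) * Real.log (1 - 3 * s)) + Real.log (1 - 3 * s)) u).sub
      ((a1.mul a1).const_mul (1 / 2))).sub ((a1.mul l1).const_mul (1 / 6))).add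
      ((a1.mul a1).const_mul (1 / 12))).add ((a2.mul l2).const_mul (1 / 6))).sub
      ((a2.mul a2).const_mul (1 / 12))).add ((l2.sub a2).const_mul ((2 - 3 * s) / 3)))).const_mul (3 / 2)
    refine HasDerivAt.congr_deriv this ?_
    ring
  · apply IntervalIntegrable.const_mul
    refine IntervalIntegrable.sub ?_ ((aux_int 1 (-3) _ _ (by norm_num)).const_mul _)
    apply Continuous.intervalIntegrable
    fun_prop

/-- Define `r(u,v) = (9/2)·(2·ln(1 − 3(u−v)) − ln(3v·(1 − 3u)) − (1 − 6(u−v))/(1 − 3(u−v)))`.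
Then for every `t ∈ [1/3, 2/3]`,
`∫_{t−1/3}^{1/3} ∫_0^{u−t+1/3} r(u,v) dv du = 1 − (3/2)·t`. -/
theorem stmt_3
    (r : ℝ → ℝ → ℝ)
    (hr : ∀ u v, 0 < v → v ≤ u → u < 1 / 3 →
      r u v = (9 / 2) * (2 * Real.log (1 - 3 * (u - v)) - Real.log (3 * v * (1 - 3 * u))
          - (1 - 6 * (u - v)) / (1 - 3 * (u - v))))
    (t : ℝ) (ht : t ∈ Set.Icc (1 / 3 : ℝ) (2 / 3)) :
    ∫ u in (t - 1 / 3)..(1 / 3), ∫ v in (0 : ℝ)..(u - t + 1 / 3), r u v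
      = 1 - (3 / 2) * t := by
  obtain ⟨ht1, ht2⟩ := ht
  have hs1 : t - 1 / 3 ≤ 1 / 3 := by linarith
  have key := outer_int (t - 1 / 3) hs1
  have e : 1 - (3 / 2) * t = 1 / 2 - (3 / 2) * (t - 1 / 3) := by ring
  rw [e, ← key]
  apply intervalIntegral.integral_congr_ae
  have hne : ∀ᵐ u : ℝ, u ≠ 1 / 3 := Measure.ae_ne volume _
  filter_upwards [hne] with u hu hmem
  rw [Set.uIoc_of_le hs1] at hmem
  have hu3 : u < 1 / 3 := lt_of_le_of_ne hmem.2 hu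
  rw [← inner_int (t - 1 / 3) u hmem.1 hu3]
  have e2 : u - t + 1 / 3 = u - (t - 1 / 3) := by ring
  rw [e2]
  apply intervalIntegral.integral_congr_ae
  refine Filter.Eventually.of_forall fun v hv => ?_
  rw [Set.uIoc_of_le (by linarith [hmem.1])] at hv
  have hv0 := hv.1
  have hvu : v ≤ u := by linarith [hv.2]
  have hp : 0 < 1 - 3 * u := by linarith
  have hq : 0 < (1 - 3 * u) + 3 * v := by linarith
  rw [hr u v hv0 hvu hu3, Real.log_mul (by positivity) hp.ne']
  have e3 : 1 - 3 * (u - v) = (1 - 3 * u) + 3 * v := by ring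
  rw [e3, zero_add]
  have e4 : (1 - 6 * (u - v)) / ((1 - 3 * u) + 3 * v) = 2 - 1 / ((1 - 3 * u) + 3 * v) := by
    rw [eq_sub_iff_add_eq, ← add_div, div_eq_iff hq.ne']
    ring
  rw [e4]
end

section
/- Let μ be the probability measure on ℝ³ whose density with respect to Lebesgue measure is h(x,y,z) = (81/2)·w/(2 − 3w) with w = |x−y| + |y−z| + |z−x| on the cube [0,1/3]^3, and 0 outside the cube. Then the pushforward of μ under the map (x,y,z) ↦ x − y + 1/3 is the uniform probability distribution on the interval [0, 2/3]. -/
open MeasureTheory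
open scoped ENNReal

lemma aux_fubini (G : ℝ × ℝ × ℝ → ℝ≥0∞) (hG : Measurable G) :
    ∫⁻ p, G p = ∫⁻ t, ∫⁻ s, ∫⁻ y, G (y + t, y, y + s) := by
  have e1 : ∫⁻ p, G p = ∫⁻ x, ∫⁻ y, ∫⁻ z, G (x, y, z) := by
    rw [Measure.volume_eq_prod, lintegral_prod _ hG.aemeasurable]
    refine lintegral_congr fun x => ?_
    rw [Measure.volume_eq_prod, lintegral_prod _ (by fun_prop)]
  rw [e1, lintegral_lintegral_swap]
  · have e2 : ∀ y : ℝ, ∫⁻ x, ∫⁻ z, G (x, y, z) = ∫⁻ t, ∫⁻ s, G (y + t, y, y + s) := by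
      intro y
      rw [← lintegral_add_left_eq_self (fun x => ∫⁻ z, G (x, y, z)) y]
      refine lintegral_congr fun t => ?_
      rw [← lintegral_add_left_eq_self (fun z => G (y + t, y, z)) y]
    simp_rw [e2]
    rw [lintegral_lintegral_swap]
    · refine lintegral_congr fun t => ?_
      rw [lintegral_lintegral_swap]
      exact Measurable.aemeasurable (by unfold Function.uncurry; fun_prop)
    · refine Measurable.aemeasurable ?_
      unfold Function.uncurry
      exact Measurable.lintegral_prod_right' (f := fun q : (ℝ × ℝ) × ℝ =>
        G (q.1.1 + q.1.2, q.1.1, q.1.1 + q.2)) (by fun_prop)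
  · refine Measurable.aemeasurable ?_
    unfold Function.uncurry
    exact Measurable.lintegral_prod_right' (f := fun q : (ℝ × ℝ) × ℝ =>
        G (q.1.1, q.1.2, q.2)) (by fun_prop)

lemma aux_y (t s : ℝ) (K : ℝ≥0∞) (H : ℝ → ℝ≥0∞)
    (h1 : ∀ y, y ∈ Set.Icc (0 : ℝ) (1/3) → y + t ∈ Set.Icc (0 : ℝ) (1/3) →
      y + s ∈ Set.Icc (0 : ℝ) (1/3) → H y = K)
    (h2 : ∀ y, ¬ (y ∈ Set.Icc (0 : ℝ) (1/3) ∧ y + t ∈ Set.Icc (0 : ℝ) (1/3) ∧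
      y + s ∈ Set.Icc (0 : ℝ) (1/3)) → H y = 0) :
    ∫⁻ y, H y = K * ENNReal.ofReal (1/3 - (|t| + |s| + |s - t|) / 2) := by
  have e : H = (Set.Icc (max 0 (max (-t) (-s))) (min (1/3) (min (1/3 - t) (1/3 - s)))).indicator
      (fun _ => K) := by
    funext y
    by_cases hy : y ∈ Set.Icc (max 0 (max (-t) (-s))) (min (1/3) (min (1/3 - t) (1/3 - s)))
    · rw [Set.indicator_of_mem hy]
      simp only [Set.mem_Icc, max_le_iff, le_min_iff] at hy
      apply h1 <;> constructor <;> linarith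
    · rw [Set.indicator_of_notMem hy]
      apply h2
      rintro ⟨a, b, c⟩
      apply hy
      simp only [Set.mem_Icc, max_le_iff, le_min_iff] at *
      refine ⟨⟨?_, ?_, ?_⟩, ?_, ?_, ?_⟩ <;> linarith
  rw [e, lintegral_indicator_const measurableSet_Icc, Real.volume_Icc]
  congr 2
  grind

lemma aux_k (w : ℝ) (hw : 0 ≤ w) : ENNReal.ofReal ((81/2) * w / (2 - 3 * w)) *
    ENNReal.ofReal (1/3 - w/2) = if w < 2/3 then ENNReal.ofReal (27/4 * w) else 0 := by
  split_ifs with h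
  · rw [← ENNReal.ofReal_mul (div_nonneg (by positivity) (by linarith))]
    congr 1
    have : 2 - 3 * w ≠ 0 := by intro h'; linarith
    rw [div_mul_eq_mul_div, div_eq_iff this]
    ring
  · rw [ENNReal.ofReal_of_nonpos (p := 1/3 - w/2) (by linarith), mul_zero]

lemma aux_pos (t : ℝ) (h0 : 0 ≤ t) (h1 : t < 1/3) :
    ∫⁻ s : ℝ, (if |t| + |s| + |s - t| < 2/3 then
      ENNReal.ofReal (27/4 * (|t| + |s| + |s - t|)) else 0) = 3/2 := by
  have e : (fun s : ℝ => if |t| + |s| + |s - t| < 2/3 then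
      ENNReal.ofReal (27/4 * (|t| + |s| + |s - t|)) else 0) =
      (Set.Ioo (t - 1/3) (1/3)).indicator
        (fun s => ENNReal.ofReal (27/4 * (|t| + |s| + |s - t|))) := by
    funext s
    have : |t| + |s| + |s - t| < 2/3 ↔ s ∈ Set.Ioo (t - 1/3) (1/3) := by
      rw [Set.mem_Ioo]; grind
    simp only [Set.indicator, this]
  rw [e, lintegral_indicator measurableSet_Ioo, Measure.restrict_congr_set Ioo_ae_eq_Ioc]
  have hc : Continuous (fun s : ℝ => 27/4 * (|t| + |s| + |s - t|)) := by fun_prop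
  have hi := fun a b => hc.intervalIntegrable (μ := volume) a b
  rw [← ofReal_integral_eq_lintegral_ofReal (hi (t - 1/3) (1/3)).1
    (Filter.Eventually.of_forall fun s => by positivity),
    ← intervalIntegral.integral_of_le (by linarith),
    ← intervalIntegral.integral_add_adjacent_intervals (hi _ 0) (hi 0 _),
    ← intervalIntegral.integral_add_adjacent_intervals (hi 0 t) (hi t _)]
  have i1 : ∫ s in (t - 1/3)..0, 27/4 * (|t| + |s| + |s - t|) =
      ∫ s in (t - 1/3)..0, 27/4 * (2 * t - 2 * s) := by
    refine intervalIntegral.integral_congr fun s hs => ?_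
    rw [Set.uIcc_of_le (by linarith), Set.mem_Icc] at hs
    grind
  have i2 : ∫ s in (0:ℝ)..t, 27/4 * (|t| + |s| + |s - t|) = ∫ s in (0:ℝ)..t, 27/4 * (2 * t) := by
    refine intervalIntegral.integral_congr fun s hs => ?_
    rw [Set.uIcc_of_le (by linarith), Set.mem_Icc] at hs
    grind
  have i3 : ∫ s in t..(1/3), 27/4 * (|t| + |s| + |s - t|) =
      ∫ s in t..(1/3), 27/4 * (2 * s) := by
    refine intervalIntegral.integral_congr fun s hs => ?_
    rw [Set.uIcc_of_le (by linarith), Set.mem_Icc] at hs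
    grind
  rw [i1, i2, i3]
  have j1 : ∫ s in (t - 1/3)..0, 27/4 * (2 * t - 2 * s) = 27/4 * (1/9 - t^2) := by
    rw [intervalIntegral.integral_const_mul, intervalIntegral.integral_sub (by simp)
      (Continuous.intervalIntegrable (by fun_prop) _ _), intervalIntegral.integral_const_mul,
      intervalIntegral.integral_const_mul, integral_id, intervalIntegral.integral_const]
    simp only [smul_eq_mul]; ring
  have j3 : ∫ s in t..(1/3), 27/4 * (2 * s) = 27/4 * (1/9 - t^2) := by
    rw [intervalIntegral.integral_const_mul, intervalIntegral.integral_const_mul, integral_id]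
    ring
  rw [j1, j3, intervalIntegral.integral_const, smul_eq_mul]
  rw [show (27/4 * (1/9 - t^2) + ((t - 0) * (27/4 * (2 * t)) + 27/4 * (1/9 - t^2)) : ℝ) = 3/2 by
    ring]
  rw [ENNReal.ofReal_div_of_pos (by norm_num)]
  simp

lemma aux_t (t : ℝ) : ∫⁻ s : ℝ, (if |t| + |s| + |s - t| < 2/3 then
      ENNReal.ofReal (27/4 * (|t| + |s| + |s - t|)) else 0) =
      (Set.Ioo (-1/3 : ℝ) (1/3)).indicator (fun _ => (3/2 : ℝ≥0∞)) t := by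
  by_cases ht : t ∈ Set.Ioo (-1/3 : ℝ) (1/3)
  · rw [Set.indicator_of_mem ht]
    rcases le_total 0 t with h0 | h0
    · exact aux_pos t h0 ht.2
    · rw [← aux_pos (-t) (by linarith) (by linarith [ht.1]), ← lintegral_neg_eq_self]
      refine lintegral_congr fun s => ?_
      rw [abs_neg, abs_neg, show -s - t = -(s - -t) by ring, abs_neg]
  · rw [Set.indicator_of_notMem ht]
    refine (lintegral_congr fun s => ?_).trans lintegral_zero
    rw [if_neg]
    intro h
    apply ht
    rw [Set.mem_Ioo]; grind

/-- Let `μ` be the probability measure on `ℝ³` with density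
`h(x,y,z) = (81/2)·w/(2 − 3w)`, `w = |x−y| + |y−z| + |z−x|`, on the cube `[0,1/3]³`
(and `0` outside). Then the pushforward of `μ` under `(x,y,z) ↦ x − y + 1/3` is the
uniform probability distribution on `[0, 2/3]`. -/
theorem stmt_4
    (h : ℝ × ℝ × ℝ → ℝ)
    (hh : ∀ p : ℝ × ℝ × ℝ, h p =
      (81 / 2) * (|p.1 - p.2.1| + |p.2.1 - p.2.2| + |p.2.2 - p.1|) /
        (2 - 3 * (|p.1 - p.2.1| + |p.2.1 - p.2.2| + |p.2.2 - p.1|)))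
    (C : Set (ℝ × ℝ × ℝ))
    (hC : C = Set.Icc (0 : ℝ) (1 / 3) ×ˢ Set.Icc (0 : ℝ) (1 / 3) ×ˢ Set.Icc (0 : ℝ) (1 / 3))
    (μ : Measure (ℝ × ℝ × ℝ))
    (hμ : μ = volume.withDensity (fun p => ENNReal.ofReal (C.indicator h p))) :
    IsProbabilityMeasure μ ∧
    Measure.map (fun p : ℝ × ℝ × ℝ => p.1 - p.2.1 + 1 / 3) μ
      = (3 / 2 : ℝ≥0∞) • volume.restrict (Set.Icc (0 : ℝ) (2 / 3)) := by
  have hm : Measurable h := by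
    rw [show h = _ from funext hh]
    fun_prop
  have hCm : MeasurableSet C := by
    rw [hC]
    exact measurableSet_Icc.prod (measurableSet_Icc.prod measurableSet_Icc)
  have hF : Measurable (fun p => ENNReal.ofReal (C.indicator h p)) :=
    (hm.indicator hCm).ennreal_ofReal
  have key : Measure.map (fun p : ℝ × ℝ × ℝ => p.1 - p.2.1 + 1 / 3) μ
      = (3 / 2 : ℝ≥0∞) • volume.restrict (Set.Icc (0 : ℝ) (2 / 3)) := by
    have hφ : Measurable (fun p : ℝ × ℝ × ℝ => p.1 - p.2.1 + 1 / 3) := by fun_prop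
    ext A hA
    rw [Measure.map_apply hφ hA, hμ, withDensity_apply _ (hφ hA),
      ← lintegral_indicator (hφ hA), aux_fubini _ (hF.indicator (hφ hA))]
    have step : ∀ t : ℝ, ∫⁻ s, ∫⁻ y, ((fun p : ℝ × ℝ × ℝ => p.1 - p.2.1 + 1 / 3) ⁻¹' A).indicator
        (fun p => ENNReal.ofReal (C.indicator h p)) (y + t, y, y + s) =
        (A ∩ Set.Ioo (0 : ℝ) (2/3)).indicator (fun _ => (3/2 : ℝ≥0∞)) (t + 1/3) := by
      intro t
      by_cases hA' : t + 1/3 ∈ A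
      · have e1 : ∀ s y : ℝ, ((fun p : ℝ × ℝ × ℝ => p.1 - p.2.1 + 1 / 3) ⁻¹' A).indicator
            (fun p => ENNReal.ofReal (C.indicator h p)) (y + t, y, y + s) =
            ENNReal.ofReal (C.indicator h (y + t, y, y + s)) := by
          intro s y
          rw [Set.indicator_of_mem]
          simpa [Set.mem_preimage] using hA'
        simp_rw [e1]
        have e2 : ∀ s : ℝ, ∫⁻ y, ENNReal.ofReal (C.indicator h (y + t, y, y + s)) =
            if |t| + |s| + |s - t| < 2/3 then
              ENNReal.ofReal (27/4 * (|t| + |s| + |s - t|)) else 0 := by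
          intro s
          rw [← aux_k _ (by positivity)]
          apply aux_y t s
          · intro y a b c
            rw [Set.indicator_of_mem (by rw [hC]; exact ⟨b, a, c⟩), hh]
            dsimp only
            rw [show y + t - y = t by ring, show y - (y + s) = -s by ring,
              show y + s - (y + t) = s - t by ring, abs_neg]
          · intro y hy
            rw [Set.indicator_of_notMem, ENNReal.ofReal_zero]
            rw [hC]
            rintro ⟨b, a, c⟩
            exact hy ⟨a, b, c⟩
        simp_rw [e2]
        rw [aux_t]
        have : t ∈ Set.Ioo (-1/3 : ℝ) (1/3) ↔ t + 1/3 ∈ A ∩ Set.Ioo (0 : ℝ) (2/3) := by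
          simp only [Set.mem_inter_iff, hA', true_and, Set.mem_Ioo]
          constructor <;> rintro ⟨_, _⟩ <;> constructor <;> linarith
        by_cases ht : t ∈ Set.Ioo (-1/3 : ℝ) (1/3)
        · rw [Set.indicator_of_mem ht, Set.indicator_of_mem (this.1 ht)]
        · rw [Set.indicator_of_notMem ht, Set.indicator_of_notMem (fun hx => ht (this.2 hx))]
      · rw [Set.indicator_of_notMem (fun hx => hA' hx.1)]
        have e1 : ∀ s y : ℝ, ((fun p : ℝ × ℝ × ℝ => p.1 - p.2.1 + 1 / 3) ⁻¹' A).indicator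
            (fun p => ENNReal.ofReal (C.indicator h p)) (y + t, y, y + s) = 0 := by
          intro s y
          rw [Set.indicator_of_notMem]
          simpa [Set.mem_preimage] using hA'
        simp_rw [e1]
        simp
    simp_rw [step]
    rw [lintegral_add_right_eq_self
      (fun u => (A ∩ Set.Ioo (0 : ℝ) (2/3)).indicator (fun _ => (3/2 : ℝ≥0∞)) u) (1/3),
      lintegral_indicator_const (hA.inter measurableSet_Ioo), Measure.smul_apply, smul_eq_mul,
      ← Measure.restrict_apply hA, Measure.restrict_congr_set Ioo_ae_eq_Icc]
  refine ⟨⟨?_⟩, key⟩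
  have h1 := congrArg (fun m : Measure ℝ => m Set.univ) key
  beta_reduce at h1
  rw [Measure.map_apply (by fun_prop) MeasurableSet.univ, Set.preimage_univ] at h1
  rw [h1, Measure.smul_apply, Measure.restrict_apply_univ, Real.volume_Icc, smul_eq_mul,
    sub_zero, show (3/2 : ℝ≥0∞) = ENNReal.ofReal (3/2) by
      rw [ENNReal.ofReal_div_of_pos (by norm_num)]; simp,
    ← ENNReal.ofReal_mul (by norm_num)]
  norm_num
end

section
/- For every integer n ≥ 2 there exists a probability measure μ on ℝⁿ such that μ-almost surely the coordinates b_1, …, b_n satisfy b_i ∈ [0, 2/n] for all i and b_1 + ⋯ + b_n = 1, and for each i the pushforward of μ under the i-th coordinate projection is the uniform probability distribution on [0, 2/n]. -/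
open MeasureTheory
open scoped ENNReal

lemma aff_map (a b : ℝ) (ha : a ≠ 0) (s : Set ℝ) (hs : MeasurableSet s) :
    Measure.map (fun x => a * x + b) (volume.restrict ((fun x : ℝ => a * x + b) ⁻¹' s))
      = ENNReal.ofReal |a⁻¹| • (volume : Measure ℝ).restrict s := by
  have hm : Measurable (fun x : ℝ => a * x + b) := by fun_prop
  rw [← Measure.restrict_map hm hs, ← Measure.restrict_smul]
  congr 1
  have h : (fun x : ℝ => a * x + b) = (fun x => x + b) ∘ (fun x => a * x) := rfl
  rw [h, ← Measure.map_map (by fun_prop) (by fun_prop), Real.map_volume_mul_left ha,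
    Measure.map_smul, map_add_right_eq_self]

/-- The Lebesgue measure on the unit interval. -/
noncomputable def lam : Measure ℝ := volume.restrict (Set.Icc (0 : ℝ) 1)

lemma aff_map_of (a b : ℝ) (ha : a ≠ 0) (s t : Set ℝ) (hs : MeasurableSet s)
    (ht : (fun x : ℝ => a * x + b) ⁻¹' s = t) :
    Measure.map (fun x => a * x + b) (volume.restrict t)
      = ENNReal.ofReal |a⁻¹| • (volume : Measure ℝ).restrict s := by
  rw [← ht, aff_map a b ha s hs]

lemma lam_split (c : ℝ) (h0 : 0 ≤ c) (h1 : c ≤ 1) :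
    lam = volume.restrict (Set.Icc 0 c) + volume.restrict (Set.Ioc c 1) := by
  rw [lam, ← Set.Icc_union_Ioc_eq_Icc h0 h1, Measure.restrict_union _ measurableSet_Ioc]
  rw [Set.disjoint_left]
  rintro x hx hx'
  exact absurd hx.2 (not_le.2 hx'.1)

lemma map_piece (a b a' b' : ℝ) :
    Measure.map (fun x => if x ≤ 1/2 then a * x + b else a' * x + b') lam
     = Measure.map (fun x => a * x + b) (volume.restrict (Set.Icc 0 (1/2)))
      + Measure.map (fun x => a' * x + b') (volume.restrict (Set.Ioc (1/2) 1)) := by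
  have hm : Measurable (fun x : ℝ => if x ≤ 1/2 then a * x + b else a' * x + b') :=
    Measurable.ite measurableSet_Iic (by fun_prop) (by fun_prop)
  rw [lam_split (1/2) (by norm_num) (by norm_num), Measure.map_add _ _ hm]
  congr 1
  · apply Measure.map_congr
    filter_upwards [ae_restrict_mem measurableSet_Icc] with x hx
    simp only [if_pos hx.2]
  · apply Measure.map_congr
    filter_upwards [ae_restrict_mem measurableSet_Ioc] with x hx
    simp only [if_neg (not_le.2 hx.1)]

noncomputable def fY (x : ℝ) : ℝ := if x ≤ 1/2 then 1 * x + 1/2 else 1 * x + -(1/2)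
noncomputable def fZ (x : ℝ) : ℝ := if x ≤ 1/2 then (-2) * x + 1 else (-2) * x + 2

lemma map_Y : Measure.map fY lam = lam := by
  unfold fY
  rw [map_piece, aff_map_of 1 (1/2) one_ne_zero (Set.Icc (1/2) 1) _ measurableSet_Icc,
    aff_map_of 1 (-(1/2)) one_ne_zero (Set.Ioc 0 (1/2)) _ measurableSet_Ioc]
  · rw [lam_split (1/2) (by norm_num) (by norm_num)]
    rw [restrict_Ioc_eq_restrict_Icc, restrict_Ioc_eq_restrict_Icc]
    simp [add_comm]
  · ext x; simp only [Set.mem_preimage, Set.mem_Ioc]; constructor <;> rintro ⟨h, h'⟩ <;>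
      constructor <;> linarith
  · ext x; simp only [Set.mem_preimage, Set.mem_Icc]; constructor <;> rintro ⟨h, h'⟩ <;>
      constructor <;> linarith

lemma map_Z : Measure.map fZ lam = lam := by
  unfold fZ
  rw [map_piece, aff_map_of (-2) 1 (by norm_num) (Set.Icc 0 1) _ measurableSet_Icc,
    aff_map_of (-2) 2 (by norm_num) (Set.Ico 0 1) _ measurableSet_Ico]
  · rw [restrict_Ico_eq_restrict_Icc, ← add_smul, ← ENNReal.ofReal_add (by positivity)
      (by positivity)]
    have : |(-2:ℝ)⁻¹| + |(-2:ℝ)⁻¹| = 1 := by rw [abs_inv, abs_neg]; norm_num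
    rw [this]; simp [lam]
  · ext x; simp only [Set.mem_preimage, Set.mem_Ioc, Set.mem_Ico]; constructor <;>
      rintro ⟨h, h'⟩ <;> constructor <;> linarith
  · ext x; simp only [Set.mem_preimage, Set.mem_Icc]; constructor <;> rintro ⟨h, h'⟩ <;>
      constructor <;> linarith

lemma map_flip : Measure.map (fun x : ℝ => 1 - x) lam = lam := by
  have h : (fun x : ℝ => 1 - x) = fun x => (-1) * x + 1 := by ext x; ring
  rw [h, lam, aff_map_of (-1) 1 (by norm_num) (Set.Icc 0 1) _ measurableSet_Icc]
  · simp
  · ext x; simp only [Set.mem_preimage, Set.mem_Icc]; constructor <;> rintro ⟨h, h'⟩ <;>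
      constructor <;> linarith

noncomputable def alt (i : ℕ) (x : ℝ) : ℝ := if Even i then x else 1 - x

noncomputable def oddf : ℕ → ℝ → ℝ
  | 0 => fY
  | 1 => fZ
  | (i + 2) => alt i

/-- What every coordinate function satisfies. -/
def Good (g : ℝ → ℝ) : Prop :=
  Measurable g ∧ Measure.map g lam = lam ∧ ∀ x ∈ Set.Icc (0 : ℝ) 1, g x ∈ Set.Icc (0 : ℝ) 1

lemma good_alt (i : ℕ) : Good (alt i) := by
  unfold alt
  by_cases h : Even i
  · simp only [h, if_true]
    exact ⟨measurable_id, Measure.map_id, fun x hx => hx⟩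
  · simp only [h, if_false]
    exact ⟨by fun_prop, map_flip, fun x hx => ⟨by linarith [hx.2], by linarith [hx.1]⟩⟩

lemma good_odd (i : ℕ) : Good (oddf i) := by
  match i with
  | 0 =>
    refine ⟨Measurable.ite measurableSet_Iic (by fun_prop) (by fun_prop), map_Y, ?_⟩
    rintro x ⟨h0, h1⟩
    simp only [oddf, fY]
    split_ifs <;> constructor <;> linarith
  | 1 =>
    refine ⟨Measurable.ite measurableSet_Iic (by fun_prop) (by fun_prop), map_Z, ?_⟩
    rintro x ⟨h0, h1⟩
    simp only [oddf, fZ]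
    split_ifs <;> constructor <;> linarith
  | (i + 2) => exact good_alt i

lemma sum_alt (k : ℕ) (x : ℝ) : ∑ i ∈ Finset.range (2 * k), alt i x = k := by
  induction k with
  | zero => simp
  | succ k ih =>
    rw [show 2 * (k + 1) = 2 * k + 1 + 1 by ring, Finset.sum_range_succ, Finset.sum_range_succ, ih]
    have h1 : Even (2 * k) := even_two_mul k
    have h2 : ¬ Even (2 * k + 1) := by simp
    simp only [alt, h1, h2, if_true, if_false]
    push_cast; ring

lemma sum_odd (k : ℕ) (x : ℝ) : ∑ i ∈ Finset.range (2 * k + 1 + 2), oddf i x = k + 3 / 2 := by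
  rw [Finset.sum_range_succ', Finset.sum_range_succ']
  simp only [oddf]
  rw [Finset.sum_range_succ, sum_alt]
  have h1 : Even (2 * k) := even_two_mul k
  simp only [alt, h1, if_true, fY, fZ]
  split_ifs <;> ring

lemma exists_family (n : ℕ) (hn : 2 ≤ n) :
    ∃ f : ℕ → ℝ → ℝ, (∀ i, Good (f i)) ∧ ∀ x, ∑ i ∈ Finset.range n, f i x = n / 2 := by
  rcases Nat.even_or_odd' n with ⟨k, rfl | rfl⟩
  · refine ⟨alt, good_alt, fun x => ?_⟩
    rw [sum_alt]; push_cast; ring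
  · obtain ⟨m, rfl⟩ : ∃ m, k = m + 1 := ⟨k - 1, by omega⟩
    refine ⟨oddf, good_odd, fun x => ?_⟩
    rw [show 2 * (m + 1) + 1 = 2 * m + 1 + 2 by ring, sum_odd]; push_cast; ring

/-- For every integer `n ≥ 2` there exists a probability measure `μ` on `ℝⁿ` such that
`μ`-almost surely the coordinates satisfy `bᵢ ∈ [0, 2/n]` for all `i` and `∑ bᵢ = 1`,
and each coordinate projection pushes `μ` forward to the uniform distribution on
`[0, 2/n]`. -/
theorem stmt_5 (n : ℕ) (hn : 2 ≤ n) :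
    ∃ μ : Measure (Fin n → ℝ), IsProbabilityMeasure μ ∧
      (∀ᵐ b ∂μ, (∀ i, b i ∈ Set.Icc (0 : ℝ) (2 / n)) ∧ ∑ i, b i = 1) ∧
      (∀ i, Measure.map (fun b => b i) μ
        = ENNReal.ofReal ((n : ℝ) / 2) • volume.restrict (Set.Icc (0 : ℝ) (2 / n))) := by
  obtain ⟨f, hf, hsum⟩ := exists_family n hn
  have hn0 : (0 : ℝ) < n := by exact_mod_cast (by omega : 0 < n)
  have hc : (0 : ℝ) < 2 / n := by positivity
  set F : ℝ → Fin n → ℝ := fun x i => 2 / n * f i x with hF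
  have hFm : Measurable F := measurable_pi_lambda _ fun i => ((hf i).1).const_mul _
  have hprob : IsProbabilityMeasure lam := ⟨by simp [lam]⟩
  refine ⟨Measure.map F lam, Measure.isProbabilityMeasure_map hFm.aemeasurable, ?_, ?_⟩
  · rw [ae_map_iff hFm.aemeasurable]
    · have hmem : ∀ᵐ x ∂lam, x ∈ Set.Icc (0 : ℝ) 1 := ae_restrict_mem measurableSet_Icc
      filter_upwards [hmem] with x hx
      refine ⟨fun i => ?_, ?_⟩
      · have := (hf i).2.2 x hx
        exact ⟨mul_nonneg hc.le this.1, mul_le_of_le_one_right hc.le this.2⟩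
      · simp only [hF]
        rw [← Finset.mul_sum, Fin.sum_univ_eq_sum_range (fun i => f i x), hsum]
        field_simp
    · apply MeasurableSet.inter
      · have h : MeasurableSet {b : Fin n → ℝ | ∀ i, b i ∈ Set.Icc (0 : ℝ) (2 / n)} := by
          rw [Set.setOf_forall]
          exact MeasurableSet.iInter fun i => measurable_pi_apply i measurableSet_Icc
        exact h
      · exact measurableSet_eq_fun (by fun_prop) (by fun_prop)
  · intro i
    rw [Measure.map_map (measurable_pi_apply i) hFm]
    have h : (fun b : Fin n → ℝ => b i) ∘ F = (fun x => 2 / (n : ℝ) * x + 0) ∘ f i := by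
      ext x; simp [hF]
    rw [h, ← Measure.map_map (by fun_prop) (hf i).1, (hf i).2.1, lam,
      aff_map_of (2 / n) 0 hc.ne' (Set.Icc 0 (2 / n)) _ measurableSet_Icc]
    · rw [abs_of_pos (inv_pos.2 hc), inv_div]
    · ext x
      simp only [Set.mem_preimage, Set.mem_Icc, add_zero]
      rw [mul_nonneg_iff_of_pos_left hc, mul_le_iff_le_one_right hc]
end

section
/- Let k ≥ 2 be an integer and set c = 1/(k−1). Let Δ = {(b_1, …, b_{k−1}) ∈ ℝ^{k−1} : b_i > 0 for all i and b_1 + ⋯ + b_{k−1} < 1}, and write b_k = 1 − (b_1 + ⋯ + b_{k−1}). Then the integral α = ∫_Δ (b_1 b_2 ⋯ b_{k−1} b_k)^{c−1} d(b_1,…,b_{k−1}) is finite and positive, and for every a ∈ [0,1], ∫_{Δ ∩ {b_k ≤ a}} (b_1 b_2 ⋯ b_{k−1} b_k)^{c−1} d(b_1,…,b_{k−1}) = a^c · α. -/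
open MeasureTheory

lemma aux_wmeas (m : ℕ) (c : ℝ) :
    Measurable (fun b : Fin m → ℝ => ENNReal.ofReal (∏ i, (b i) ^ (c - 1))) := by
  fun_prop

lemma aux_Pmeas (m : ℕ) : MeasurableSet {b : Fin m → ℝ | ∀ i, 0 < b i} := by
  rw [Set.ofPred_forall]
  exact MeasurableSet.iInter fun i => measurableSet_lt measurable_const (measurable_pi_apply i)

lemma aux_Dmeas (m : ℕ) (t : ℝ) :
    MeasurableSet {b : Fin m → ℝ | (∀ i, 0 < b i) ∧ ∑ i, b i < t} := by
  have hS : MeasurableSet {b : Fin m → ℝ | ∑ i, b i < t} :=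
    measurableSet_lt (by fun_prop) measurable_const
  exact (aux_Pmeas m).inter hS

noncomputable def auxMu (m : ℕ) (c : ℝ) : Measure (Fin m → ℝ) :=
  (volume.restrict {b : Fin m → ℝ | ∀ i, 0 < b i}).withDensity
    (fun b => ENNReal.ofReal (∏ i, (b i) ^ (c - 1)))

lemma aux_apply (m : ℕ) (c : ℝ) (t : ℝ) :
    auxMu m c {b | ∑ i, b i < t} = ∫⁻ b, Set.indicator {b : Fin m → ℝ | (∀ i, 0 < b i) ∧ ∑ i, b i < t}
      (fun b => ENNReal.ofReal (∏ i, (b i) ^ (c - 1))) b := by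
  have hS : MeasurableSet {b : Fin m → ℝ | ∑ i, b i < t} :=
    measurableSet_lt (by fun_prop) measurable_const
  rw [auxMu, withDensity_apply _ hS, Measure.restrict_restrict hS, lintegral_indicator]
  · congr 2
    ext b; simp [and_comm]
  · exact (aux_Pmeas m).inter hS

lemma aux_scale (m : ℕ) (c : ℝ) (hc : c * m = 1) (t : ℝ) (ht : 0 < t) :
    auxMu m c {b | ∑ i, b i < t} = ENNReal.ofReal t * auxMu m c {b | ∑ i, b i < 1} := by
  rw [aux_apply, aux_apply]
  have h := Measure.map_addHaar_smul (volume : Measure (Fin m → ℝ)) ht.ne'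
  have hm : MeasurableSet {b : Fin m → ℝ | (∀ i, 0 < b i) ∧ ∑ i, b i < t} :=
    aux_Dmeas m _
  have hF : Measurable (Set.indicator {b : Fin m → ℝ | (∀ i, 0 < b i) ∧ ∑ i, b i < t}
      (fun b => ENNReal.ofReal (∏ i, (b i) ^ (c - 1)))) := (aux_wmeas m c).indicator hm
  have h2 := lintegral_map (μ := (volume : Measure (Fin m → ℝ))) hF (measurable_const_smul t)
  rw [h, lintegral_smul_measure] at h2
  have h3 : ∀ b : Fin m → ℝ, Set.indicator {b : Fin m → ℝ | (∀ i, 0 < b i) ∧ ∑ i, b i < t}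
      (fun b => ENNReal.ofReal (∏ i, (b i) ^ (c - 1))) (t • b) = ENNReal.ofReal (t ^ (1 - m : ℝ)) *
      Set.indicator {b : Fin m → ℝ | (∀ i, 0 < b i) ∧ ∑ i, b i < 1}
      (fun b => ENNReal.ofReal (∏ i, (b i) ^ (c - 1))) b := by
    intro b
    have hiff : (t • b ∈ {b : Fin m → ℝ | (∀ i, 0 < b i) ∧ ∑ i, b i < t}) ↔
        b ∈ {b : Fin m → ℝ | (∀ i, 0 < b i) ∧ ∑ i, b i < 1} := by
      simp only [Set.mem_ofPred_eq, Pi.smul_apply, smul_eq_mul, ← Finset.mul_sum, mul_pos_iff_of_pos_left ht]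
      rw [mul_lt_iff_lt_one_right ht]
    by_cases hb : b ∈ {b : Fin m → ℝ | (∀ i, 0 < b i) ∧ ∑ i, b i < 1}
    · rw [Set.indicator_of_mem hb, Set.indicator_of_mem (hiff.2 hb), ← ENNReal.ofReal_mul (by positivity)]
      congr 1
      have : ∀ i, (t • b) i ^ (c - 1) = t ^ (c - 1) * b i ^ (c - 1) := fun i => by
        rw [Pi.smul_apply, smul_eq_mul, Real.mul_rpow ht.le (hb.1 i).le]
      simp only [this, Finset.prod_mul_distrib, Finset.prod_const, Finset.card_univ, Fintype.card_fin]
      rw [← Real.rpow_natCast, ← Real.rpow_mul ht.le]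
      congr 2
      linarith
    · rw [Set.indicator_of_notMem hb, Set.indicator_of_notMem (mt hiff.1 hb), mul_zero]
  simp only [h3] at h2
  rw [lintegral_const_mul' _ _ ENNReal.ofReal_ne_top] at h2
  have h4 : ENNReal.ofReal (t ^ m) * ENNReal.ofReal |(t ^ Module.finrank ℝ (Fin m → ℝ))⁻¹| = 1 := by
    rw [Module.finrank_fin_fun, abs_of_pos (by positivity), ← ENNReal.ofReal_mul (by positivity),
      mul_inv_cancel₀ (by positivity), ENNReal.ofReal_one]
  have h5 := congrArg (ENNReal.ofReal (t ^ m) * ·) h2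
  simp only [smul_eq_mul, ← mul_assoc] at h5
  rw [h4, one_mul, ← ENNReal.ofReal_mul (by positivity)] at h5
  rw [h5]
  congr 2
  rw [← Real.rpow_natCast, ← Real.rpow_add ht]
  simp

lemma aux_fin (m : ℕ) (c : ℝ) (hc : 0 < c) :
    auxMu m c {b | ∑ i, b i < 1} < ⊤ := by
  rw [aux_apply]
  have hm : MeasurableSet {b : Fin m → ℝ | (∀ i, 0 < b i) ∧ ∑ i, b i < 1} :=
    aux_Dmeas m _
  rw [lintegral_indicator hm]
  have h1 : IntegrableOn (fun x : ℝ => x ^ (c - 1)) (Set.Ioo 0 1) := by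
    have := intervalIntegral.intervalIntegrable_rpow' (a := 0) (b := 1) (r := c - 1) (by linarith)
    rw [intervalIntegrable_iff_integrableOn_Ioo_of_le zero_le_one] at this
    exact this
  have h2 : Integrable (fun b : Fin m → ℝ => ∏ i, (b i) ^ (c - 1))
      (Measure.pi fun _ => volume.restrict (Set.Ioo (0 : ℝ) 1)) :=
    Integrable.fintype_prod (f := fun _ x => x ^ (c - 1)) (fun _ => h1)
  rw [← Measure.restrict_pi_pi, ← volume_pi] at h2
  refine lt_of_le_of_lt (lintegral_mono_set ?_) h2.lintegral_lt_top
  rintro b ⟨hb, hs⟩ i -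
  exact ⟨hb i, (Finset.single_le_sum (fun j _ => (hb j).le) (Finset.mem_univ i)).trans_lt hs⟩

lemma aux_pos_s7 (m : ℕ) (c : ℝ) :
    0 < auxMu m c {b | ∑ i, b i < 1} := by
  rw [aux_apply]
  have hm : MeasurableSet {b : Fin m → ℝ | (∀ i, 0 < b i) ∧ ∑ i, b i < 1} :=
    aux_Dmeas m _
  have ho : IsOpen {b : Fin m → ℝ | (∀ i, 0 < b i) ∧ ∑ i, b i < 1} := by
    have hS : IsOpen {b : Fin m → ℝ | ∑ i, b i < 1} := isOpen_lt (by fun_prop) continuous_const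
    have hP : IsOpen {b : Fin m → ℝ | ∀ i, 0 < b i} := by
      simp only [Set.ofPred_forall]
      exact isOpen_iInter_of_finite fun i => isOpen_lt continuous_const (continuous_apply i)
    exact hP.inter hS
  rw [lintegral_indicator hm, setLIntegral_pos_iff (aux_wmeas m c)]
  have hsub : {b : Fin m → ℝ | (∀ i, 0 < b i) ∧ ∑ i, b i < 1} ⊆
      Function.support (fun b : Fin m → ℝ => ENNReal.ofReal (∏ i, (b i) ^ (c - 1))) := by
    intro b hb
    have : 0 < ∏ i, (b i) ^ (c - 1) := Finset.prod_pos fun i _ => Real.rpow_pos_of_pos (hb.1 i) _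
    simpa using this
  rw [Set.inter_eq_right.2 hsub]
  refine ho.measure_pos _ ⟨fun _ => 1 / (m + 1 : ℝ), fun i => by positivity, ?_⟩
  simp only [Finset.sum_const, Finset.card_univ, Fintype.card_fin, nsmul_eq_mul]
  rw [mul_one_div, div_lt_one (by positivity)]
  linarith

lemma aux_map (m : ℕ) (hm : 1 ≤ m) (c : ℝ) (hc : c * m = 1) :
    (auxMu m c).map (fun b => ∑ i, b i) =
      auxMu m c {b | ∑ i, b i < 1} • volume.restrict (Set.Ioi (0:ℝ)) := by
  have hm0 : (0:ℝ) < m := by exact_mod_cast hm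
  have hc0 : 0 < c := by
    by_contra h
    nlinarith
  have hV := (aux_fin m c hc0).ne
  have hS : Measurable (fun b : Fin m → ℝ => ∑ i, b i) := by fun_prop
  have key : ∀ t : ℝ, (auxMu m c).map (fun b => ∑ i, b i) (Set.Iio t) =
      ENNReal.ofReal t * auxMu m c {b | ∑ i, b i < 1} := by
    intro t
    rw [Measure.map_apply hS measurableSet_Iio]
    change auxMu m c {b | ∑ i, b i < t} = _
    rcases lt_or_ge 0 t with ht | ht
    · exact aux_scale m c hc t ht
    · rw [ENNReal.ofReal_of_nonpos ht, zero_mul, aux_apply]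
      convert lintegral_zero with b
      apply Set.indicator_of_notMem
      rintro ⟨h1, h2⟩
      have := Finset.sum_nonneg (fun i (_ : i ∈ Finset.univ) => (h1 i).le)
      linarith
  refine Measure.ext_of_generateFrom_of_iUnion (Set.range Set.Iio) (fun n : ℕ => Set.Iio (n : ℝ))
    (borel_eq_generateFrom_Iio ℝ ▸ BorelSpace.measurable_eq) isPiSystem_Iio ?_ (fun n => ⟨n, rfl⟩) ?_ ?_
  · ext x
    simpa using exists_nat_gt x
  · intro n
    rw [key]
    exact ENNReal.mul_ne_top ENNReal.ofReal_ne_top hV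
  · rintro _ ⟨t, rfl⟩
    rw [key, Measure.smul_apply, Measure.restrict_apply measurableSet_Iio, Set.Iio_inter_Ioi,
      Real.volume_Ioo, sub_zero, smul_eq_mul, mul_comm]

lemma aux_oneDim (c : ℝ) (hc : 0 < c) (a : ℝ) (ha : a ∈ Set.Icc (0:ℝ) 1) :
    ∫⁻ s in Set.Ico (1 - a) 1, ENNReal.ofReal ((1 - s) ^ (c - 1)) ∂(volume.restrict (Set.Ioi (0:ℝ)))
      = ENNReal.ofReal (a ^ c / c) := by
  have hle : 1 - a ≤ 1 := by linarith [ha.1]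
  have e : (volume.restrict (Set.Ioi (0:ℝ))).restrict (Set.Ico (1 - a) 1) =
      volume.restrict (Set.Ioo (1 - a) 1) := by
    rw [Measure.restrict_congr_set (μ := volume.restrict (Set.Ioi (0:ℝ))) Ioo_ae_eq_Ico.symm,
      Measure.restrict_restrict measurableSet_Ioo]
    congr 1
    rw [Set.inter_eq_left]
    intro x hx
    have := ha.2
    have := hx.1
    simp only [Set.mem_Ioi]; linarith
  rw [e]
  have hi : IntervalIntegrable (fun s : ℝ => (1 - s) ^ (c - 1)) volume (1 - a) 1 := by
    have := (intervalIntegral.intervalIntegrable_rpow' (a := a) (b := 0) (r := c - 1) (by linarith)).comp_sub_left 1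
    simpa using this
  rw [← ofReal_integral_eq_lintegral_ofReal]
  · congr 1
    rw [← integral_Ioc_eq_integral_Ioo, ← intervalIntegral.integral_of_le hle,
      intervalIntegral.integral_comp_sub_left (fun x => x ^ (c - 1)), integral_rpow (by left; linarith)]
    simp [Real.zero_rpow hc.ne']
  · exact (intervalIntegrable_iff_integrableOn_Ioo_of_le hle).1 hi
  · filter_upwards [ae_restrict_mem measurableSet_Ioo] with x hx
    exact Real.rpow_nonneg (by linarith [hx.2]) _

lemma aux_main (m : ℕ) (hm : 1 ≤ m) (c : ℝ) (hc : c * m = 1) (hc0 : 0 < c)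
    (a : ℝ) (ha : a ∈ Set.Icc (0:ℝ) 1) :
    ∫⁻ b in {b : Fin m → ℝ | (∀ i, 0 < b i) ∧ ∑ i, b i < 1} ∩ {b | 1 - ∑ i, b i ≤ a},
      ENNReal.ofReal (((∏ i, b i) * (1 - ∑ i, b i)) ^ (c - 1)) =
    auxMu m c {b | ∑ i, b i < 1} * ENNReal.ofReal (a ^ c / c) := by
  have hS : Measurable (fun b : Fin m → ℝ => ∑ i, b i) := by fun_prop
  have hg : Measurable (fun s : ℝ => ENNReal.ofReal ((1 - s) ^ (c - 1))) := by fun_prop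
  have hgS : Measurable (fun b : Fin m → ℝ => ENNReal.ofReal ((1 - ∑ i, b i) ^ (c - 1))) := by fun_prop
  have h := setLIntegral_map (μ := auxMu m c) (measurableSet_Ico (a := 1 - a) (b := 1)) hg hS
  rw [aux_map m hm c hc, Measure.restrict_smul, lintegral_smul_measure, aux_oneDim c hc0 a ha, smul_eq_mul] at h
  have hT : MeasurableSet ((fun b : Fin m → ℝ => ∑ i, b i) ⁻¹' Set.Ico (1 - a) 1) := hS measurableSet_Ico
  rw [h, auxMu, setLIntegral_withDensity_eq_setLIntegral_mul _ (aux_wmeas m c) hgS hT,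
    Measure.restrict_restrict hT]
  have hs : {b : Fin m → ℝ | (∀ i, 0 < b i) ∧ ∑ i, b i < 1} ∩ {b | 1 - ∑ i, b i ≤ a} =
      (fun b : Fin m → ℝ => ∑ i, b i) ⁻¹' Set.Ico (1 - a) 1 ∩ {b | ∀ i, 0 < b i} := by
    ext b
    simp only [Set.mem_inter_iff, Set.mem_ofPred_eq, Set.mem_preimage, Set.mem_Ico, sub_le_comm (b := ∑ i, b i)]
    tauto
  rw [hs]
  refine setLIntegral_congr_fun (hT.inter (aux_Pmeas m)) ?_
  rintro b ⟨hb1, hb2⟩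
  have hp : 0 ≤ ∏ i, b i := Finset.prod_nonneg fun i _ => (hb2 i).le
  have h1 : 0 ≤ 1 - ∑ i, b i := by have := hb1.2; simp only at this; linarith
  simp only [Pi.mul_apply]
  rw [Real.mul_rpow hp h1, ENNReal.ofReal_mul (by positivity),
    Real.finsetProd_rpow _ _ (fun i _ => (hb2 i).le)]




/-- Let `k ≥ 2`, `c = 1/(k−1)`, and let
`Δ = {(b₁,…,b_{k−1}) : bᵢ > 0 and b₁ + ⋯ + b_{k−1} < 1}` with `b_k = 1 − (b₁ + ⋯ + b_{k−1})`.
Then `α = ∫_Δ (b₁⋯b_{k−1}·b_k)^(c−1)` is finite (the integrand is integrable on `Δ`) and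
positive, and for every `a ∈ [0,1]`,
`∫_{Δ ∩ {b_k ≤ a}} (b₁⋯b_{k−1}·b_k)^(c−1) = a^c · α`. -/
theorem stmt_7 (k : ℕ) (hk : 2 ≤ k)
    (c : ℝ) (hc : c = 1 / ((k : ℝ) - 1))
    (Δ : Set (Fin (k - 1) → ℝ))
    (hΔ : Δ = {b | (∀ i, 0 < b i) ∧ ∑ i, b i < 1})
    (f : (Fin (k - 1) → ℝ) → ℝ)
    (hf : ∀ b, f b = ((∏ i, b i) * (1 - ∑ i, b i)) ^ (c - 1)) :
    IntegrableOn f Δ ∧ 0 < ∫ b in Δ, f b ∧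
      ∀ a ∈ Set.Icc (0 : ℝ) 1,
        ∫ b in Δ ∩ {b | 1 - ∑ i, b i ≤ a}, f b = a ^ c * ∫ b in Δ, f b := by
  subst hΔ
  obtain rfl : f = _ := funext hf
  have hm : 1 ≤ k - 1 := by omega
  have hk1 : ((k - 1 : ℕ) : ℝ) = (k : ℝ) - 1 := by
    rw [Nat.cast_sub (by omega)]; simp
  have hk0 : (0:ℝ) < (k : ℝ) - 1 := by
    rw [← hk1]; exact_mod_cast hm
  have hc0 : 0 < c := by rw [hc]; positivity
  have hcm : c * ((k - 1 : ℕ) : ℝ) = 1 := by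
    rw [hk1, hc]; field_simp
  have hmain := aux_main (k - 1) hm c hcm hc0
  set V := auxMu (k - 1) c {b | ∑ i, b i < 1} with hV
  have hVfin : V < ⊤ := aux_fin (k - 1) c hc0
  have hVpos : 0 < V := aux_pos_s7 (k - 1) c
  have hmeas : Measurable (fun b : Fin (k - 1) → ℝ => ((∏ i, b i) * (1 - ∑ i, b i)) ^ (c - 1)) := by
    fun_prop
  have hD : MeasurableSet {b : Fin (k - 1) → ℝ | (∀ i, 0 < b i) ∧ ∑ i, b i < 1} :=
    aux_Dmeas _ _
  have hnn : ∀ b ∈ {b : Fin (k - 1) → ℝ | (∀ i, 0 < b i) ∧ ∑ i, b i < 1},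
      0 ≤ ((∏ i, b i) * (1 - ∑ i, b i)) ^ (c - 1) := by
    rintro b ⟨h1, h2⟩
    exact Real.rpow_nonneg (mul_nonneg (Finset.prod_nonneg fun i _ => (h1 i).le) (by linarith)) _
  have hI : ∀ a ∈ Set.Icc (0:ℝ) 1,
      ∫ b in {b : Fin (k - 1) → ℝ | (∀ i, 0 < b i) ∧ ∑ i, b i < 1} ∩ {b | 1 - ∑ i, b i ≤ a},
        ((∏ i, b i) * (1 - ∑ i, b i)) ^ (c - 1) = V.toReal * (a ^ c / c) := by
    intro a ha
    rw [integral_eq_lintegral_of_nonneg_ae, hmain a ha, ENNReal.toReal_mul, ENNReal.toReal_ofReal]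
    · exact div_nonneg (Real.rpow_nonneg ha.1 _) hc0.le
    · filter_upwards [ae_restrict_mem (hD.inter (measurableSet_le (by fun_prop) measurable_const))] with b hb
      exact hnn b hb.1
    · exact hmeas.aestronglyMeasurable
  have hfull : {b : Fin (k - 1) → ℝ | (∀ i, 0 < b i) ∧ ∑ i, b i < 1} ∩ {b | 1 - ∑ i, b i ≤ 1} =
      {b : Fin (k - 1) → ℝ | (∀ i, 0 < b i) ∧ ∑ i, b i < 1} := by
    rw [Set.inter_eq_left]
    rintro b ⟨h1, h2⟩
    have := Finset.sum_nonneg (fun i (_ : i ∈ Finset.univ) => (h1 i).le)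
    simp only [Set.mem_ofPred_eq]; linarith
  have h1 := hI 1 ⟨zero_le_one, le_rfl⟩
  have h1' := hmain 1 ⟨zero_le_one, le_rfl⟩
  rw [hfull] at h1 h1'
  refine ⟨⟨hmeas.aestronglyMeasurable, ?_⟩, ?_, ?_⟩
  · rw [hasFiniteIntegral_iff_ofReal, h1']
    · exact ENNReal.mul_lt_top hVfin ENNReal.ofReal_lt_top
    · filter_upwards [ae_restrict_mem hD] with b hb
      exact hnn b hb
  · rw [h1]
    have := ENNReal.toReal_pos hVpos.ne' hVfin.ne
    rw [Real.one_rpow]; positivity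
  · intro a ha
    rw [hI a ha, h1, Real.one_rpow]
    ring
end

section
/- For all integers k ≥ 2 and m ≥ 1, setting n = k·m, there exists a probability measure μ on ℝⁿ such that μ-almost surely the coordinates b_1, …, b_n satisfy b_i ∈ [0, k/n] for all i and b_1 + ⋯ + b_n = 1, and for each i and every t ∈ [0, k/n], μ{b : b_i ≤ t} = ((n/k)·t)^{1/(k−1)}. -/
open MeasureTheory
open scoped ENNReal
open ProbabilityTheory

lemma gm_ae_pos (a r : ℝ) : ∀ᵐ x ∂(gammaMeasure a r), 0 < x := by
  rw [gammaMeasure, ae_withDensity_iff (by unfold gammaPDF; fun_prop)]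
  have : ∀ᵐ x : ℝ, x ≠ 0 := by simp [ae_iff]
  filter_upwards [this] with x hx h
  by_contra hc
  exact h (gammaPDF_of_neg (lt_of_le_of_ne (not_lt.1 hc) hx))

lemma gm_laplace {a c : ℝ} (ha : 0 < a) (hc : -1 < c) :
    ∫⁻ x, ENNReal.ofReal (Real.exp (-(c * x))) ∂(gammaMeasure a 1) =
      ENNReal.ofReal ((1 / (1 + c)) ^ a) := by
  have h1 : 0 < 1 + c := by linarith
  rw [gammaMeasure, lintegral_withDensity_eq_lintegral_mul _ (by unfold gammaPDF; fun_prop)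
    (by fun_prop)]
  have : ∀ x, (gammaPDF a 1 * fun x => ENNReal.ofReal (Real.exp (-(c * x)))) x =
      ENNReal.ofReal ((1 / (1 + c)) ^ a) * gammaPDF a (1 + c) x := by
    intro x
    rcases lt_or_ge x 0 with hx | hx
    · simp [gammaPDF_of_neg hx]
    · simp only [Pi.mul_apply]
      rw [gammaPDF_of_nonneg hx, gammaPDF_of_nonneg hx, ← ENNReal.ofReal_mul (by positivity),
        ← ENNReal.ofReal_mul (by positivity)]
      congr 1
      rw [Real.div_rpow zero_le_one h1.le, Real.one_rpow,
        show -((1 + c) * x) = -(1 * x) + -(c * x) by ring, Real.exp_add]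
      have := (Real.rpow_pos_of_pos h1 a).ne'
      field_simp
  simp_rw [this]
  rw [lintegral_const_mul _ (by unfold gammaPDF; fun_prop), lintegral_gammaPDF_eq_one ha h1, mul_one]

lemma exp_tail {y : ℝ} (hy : 0 ≤ y) : gammaMeasure 1 1 (Set.Ici y) = ENNReal.ofReal (Real.exp (-y)) := by
  have : IsProbabilityMeasure (gammaMeasure 1 1) := isProbabilityMeasure_gammaMeasure one_pos one_pos
  have hna : NullSingletonClass (gammaMeasure 1 1) := by unfold gammaMeasure; infer_instance
  have h := cdf_expMeasure_eq one_pos y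
  rw [expMeasure, cdf_eq_real, if_pos hy, one_mul] at h
  have h2 : gammaMeasure 1 1 (Set.Ici y) = gammaMeasure 1 1 (Set.Ioi y) := measure_congr Ioi_ae_eq_Ici.symm
  rw [h2, ← Set.compl_Iic, ← ofReal_measureReal, probReal_compl_eq_one_sub measurableSet_Iic, h]
  congr 1; ring

lemma gm_charFun {a : ℝ} (ha : 0 < a) (t : ℝ) :
    charFun (gammaMeasure a 1) t = (1 / (1 - t * Complex.I)) ^ (a : ℂ) := by
  have hexp : ∀ s : ℝ, s < 1 →
      ∫⁻ x, ENNReal.ofReal (Real.exp (s * x)) ∂(gammaMeasure a 1) =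
        ENNReal.ofReal ((1 / (1 - s)) ^ a) := by
    intro s hs
    have := gm_laplace ha (c := -s) (by linarith)
    simpa [sub_eq_add_neg] using this
  have hint : ∀ s : ℝ, s < 1 → Integrable (fun x => Real.exp (s * id x)) (gammaMeasure a 1) := by
    intro s hs
    refine ⟨by fun_prop, ?_⟩
    rw [hasFiniteIntegral_iff_ofReal (ae_of_all _ fun x => (Real.exp_pos _).le)]
    simp only [id]
    rw [hexp s hs]
    exact ENNReal.ofReal_lt_top
  have hmgf : ∀ s : ℝ, s < 1 → mgf id (gammaMeasure a 1) s = (1 / (1 - s)) ^ a := by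
    intro s hs
    have h1 : 0 < 1 - s := by linarith
    rw [mgf, integral_eq_lintegral_of_nonneg_ae (ae_of_all _ fun x => (Real.exp_pos _).le)
      (by fun_prop)]
    simp only [id]
    rw [hexp s hs, ENNReal.toReal_ofReal (by positivity)]
  have hsub : Set.Iio (1:ℝ) ⊆ interior (integrableExpSet id (gammaMeasure a 1)) :=
    interior_maximal (fun s hs => hint s hs) isOpen_Iio
  have hA : AnalyticOnNhd ℂ (complexMGF id (gammaMeasure a 1)) {z | z.re < 1} :=
    fun z hz => analyticAt_complexMGF (hsub hz)
  have hB : AnalyticOnNhd ℂ (fun z : ℂ => (1 / (1 - z)) ^ (a : ℂ)) {z | z.re < 1} := by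
    intro z hz
    have hz' : z.re < 1 := hz
    have hre : 0 < (1 - z).re := by simp; linarith
    have hne : 1 - z ≠ 0 := by
      intro h
      rw [h] at hre
      simp at hre
    refine AnalyticAt.cpow (analyticAt_const.div (analyticAt_const.sub analyticAt_id) hne)
      analyticAt_const ?_
    left
    rw [one_div]
    change 0 < ((1 - z)⁻¹).re
    rw [Complex.inv_re]
    exact div_pos hre (Complex.normSq_pos.2 hne)
  have hfreq : ∃ᶠ z in nhdsWithin (0:ℂ) {0}ᶜ,
      complexMGF id (gammaMeasure a 1) z = (1 / (1 - z)) ^ (a : ℂ) := by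
    have htend : Filter.Tendsto (fun x : ℝ => (x : ℂ)) (nhdsWithin 0 {0}ᶜ)
        (nhdsWithin (0:ℂ) {0}ᶜ) := by
      rw [tendsto_nhdsWithin_iff]
      constructor
      · have h := (Complex.continuous_ofReal.tendsto 0)
        rw [Complex.ofReal_zero] at h
        exact h.mono_left nhdsWithin_le_nhds
      · filter_upwards [self_mem_nhdsWithin] with x hx
        simpa using hx
    refine htend.frequently (Filter.Eventually.frequently ?_)
    have h1 : ∀ᶠ x : ℝ in nhdsWithin 0 {0}ᶜ, x < 1 :=
      nhdsWithin_le_nhds (Iio_mem_nhds one_pos)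
    filter_upwards [h1] with x hx
    have h2 : 0 < 1 - x := by linarith
    rw [complexMGF_ofReal, hmgf x hx, Complex.ofReal_cpow (by positivity)]
    push_cast
    rfl
  have hconn : IsPreconnected {z : ℂ | z.re < 1} := (convex_halfSpace_re_lt 1).isPreconnected
  have := hA.eqOn_of_preconnected_of_frequently_eq hB hconn (z₀ := 0) (by simp) hfreq
    (x := t * Complex.I) (by simp)
  rw [← complexMGF_id_mul_I, this]

lemma main_law (k : ℕ) (hk : 2 ≤ k) (j : Fin k) :
    (Measure.pi fun _ : Fin k => gammaMeasure (1 / ((k:ℝ) - 1)) 1).map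
      (fun ω => (ω j, ∑ i ∈ Finset.univ.erase j, ω i)) =
      (gammaMeasure (1 / ((k:ℝ) - 1)) 1).prod (gammaMeasure 1 1) := by
  have hk' : (2:ℝ) ≤ k := by exact_mod_cast hk
  have ha : 0 < 1 / ((k:ℝ) - 1) := by apply one_div_pos.2; linarith
  have := isProbabilityMeasure_gammaMeasure ha one_pos
  have := isProbabilityMeasure_gammaMeasure one_pos one_pos
  set a := 1 / ((k:ℝ) - 1) with hadef
  set P := Measure.pi fun _ : Fin k => gammaMeasure a 1 with hP
  have hi : iIndepFun (fun (i : Fin k) (ω : Fin k → ℝ) => ω i) P :=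
    iIndepFun_pi (X := fun _ => id) (fun _ => aemeasurable_id)
  have hm : ∀ i, P.map (fun ω => ω i) = gammaMeasure a 1 :=
    fun i => (measurePreserving_eval (fun _ : Fin k => gammaMeasure a 1) i).map_eq
  have hI := hi.indepFun_finsetSum_of_notMem (fun i => measurable_pi_apply i)
    (Finset.notMem_erase j Finset.univ)
  have hfs : (∑ i ∈ Finset.univ.erase j, fun ω : Fin k → ℝ => ω i) =
      fun ω => ∑ i ∈ Finset.univ.erase j, ω i := by ext ω; simp
  have hsum : P.map (fun ω => ∑ i ∈ Finset.univ.erase j, ω i) = gammaMeasure 1 1 := by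
    rw [← hfs]
    have : IsProbabilityMeasure (P.map (∑ i ∈ Finset.univ.erase j, fun ω : Fin k → ℝ => ω i)) :=
      Measure.isProbabilityMeasure_map (by rw [hfs]; fun_prop)
    apply Measure.ext_of_charFun
    have hr : iIndepFun ((Finset.univ.erase j).restrict
        (fun (i : Fin k) (ω : Fin k → ℝ) => ω i)) P :=
      iIndepFun.precomp (g := fun i : (Finset.univ.erase j : Finset (Fin k)) => (i : Fin k))
        Subtype.val_injective hi
    rw [iIndepFun.charFun_map_finsetSum_eq_prod
      (fun i _ => (measurable_pi_apply i).aemeasurable) hr]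
    ext t
    simp only [hm, Finset.prod_const, Pi.pow_apply, gm_charFun ha, gm_charFun one_pos]
    rw [Finset.card_erase_of_mem (Finset.mem_univ _), Finset.card_univ, Fintype.card_fin]
    have : (a : ℂ) = ((k - 1 : ℕ) : ℂ)⁻¹ := by
      rw [hadef, Nat.cast_sub (by omega)]; push_cast; simp
    rw [this, Complex.cpow_nat_inv_pow _ (by omega)]
    simp
  rw [hfs] at hI
  have := (indepFun_iff_map_prod_eq_prod_map_map (measurable_pi_apply j).aemeasurable
    (Measurable.aemeasurable (by fun_prop))).1 hI.symm
  rw [this, hm, hsum]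

lemma main_cdf (k : ℕ) (hk : 2 ≤ k) (j : Fin k) (c : ℝ) (hc : 0 ≤ c) :
    (Measure.pi fun _ : Fin k => gammaMeasure (1 / ((k:ℝ) - 1)) 1)
      {ω | c * ω j ≤ ∑ i ∈ Finset.univ.erase j, ω i} =
      ENNReal.ofReal ((1 / (1 + c)) ^ (1 / ((k:ℝ) - 1))) := by
  have hk' : (2:ℝ) ≤ k := by exact_mod_cast hk
  have ha : 0 < 1 / ((k:ℝ) - 1) := by apply one_div_pos.2; linarith
  have := isProbabilityMeasure_gammaMeasure ha one_pos
  have := isProbabilityMeasure_gammaMeasure one_pos one_pos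
  have hs : MeasurableSet {p : ℝ × ℝ | c * p.1 ≤ p.2} :=
    measurableSet_le (by fun_prop) (by fun_prop)
  have h := congrArg (fun μ => μ {p : ℝ × ℝ | c * p.1 ≤ p.2}) (main_law k hk j)
  have hmeas : Measurable fun ω : Fin k → ℝ => (ω j, ∑ i ∈ Finset.univ.erase j, ω i) := by fun_prop
  rw [Measure.map_apply hmeas hs, Measure.prod_apply hs] at h
  refine Eq.trans h ?_
  rw [← gm_laplace ha (by linarith)]
  refine lintegral_congr_ae ?_
  filter_upwards [gm_ae_pos _ 1] with x hx
  rw [← exp_tail (by positivity)]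
  rfl

theorem stmt_9 (k m : ℕ) (hk : 2 ≤ k) (hm : 1 ≤ m) (n : ℕ) (hn : n = k * m) :
    ∃ μ : Measure (Fin n → ℝ), IsProbabilityMeasure μ ∧
      (∀ᵐ b ∂μ, (∀ i, b i ∈ Set.Icc (0 : ℝ) ((k : ℝ) / n)) ∧ ∑ i, b i = 1) ∧
      (∀ i, ∀ t ∈ Set.Icc (0 : ℝ) ((k : ℝ) / n),
        μ {b | b i ≤ t} = ENNReal.ofReal (((n : ℝ) / k * t) ^ ((1 : ℝ) / ((k : ℝ) - 1)))) := by
  have hk' : (2:ℝ) ≤ k := by exact_mod_cast hk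
  have hm' : (0:ℝ) < m := by exact_mod_cast hm
  have ha : 0 < 1 / ((k:ℝ) - 1) := by apply one_div_pos.2; linarith
  have := isProbabilityMeasure_gammaMeasure ha one_pos
  have hcdf := main_cdf k hk
  set a := 1 / ((k:ℝ) - 1) with hadef
  set P := Measure.pi fun _ : Fin k => gammaMeasure a 1 with hP
  have hkn : (k:ℝ) / n = 1 / m := by rw [hn]; push_cast; field_simp
  have hnk : (n:ℝ) / k = m := by rw [hn]; push_cast; field_simp
  rw [hkn, hnk]
  subst hn
  rw [mul_comm k m]
  have hpos : ∀ᵐ ω ∂P, ∀ i, 0 < ω i := by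
    rw [ae_all_iff]
    intro i
    exact (measurePreserving_eval (fun _ : Fin k => gammaMeasure a 1) i).quasiMeasurePreserving.ae
      (gm_ae_pos a 1)
  have : NeZero k := ⟨by omega⟩
  have hSpos : ∀ ω : Fin k → ℝ, (∀ i, 0 < ω i) → 0 < ∑ i, ω i := fun ω h =>
    Finset.sum_pos (fun i _ => h i) Finset.univ_nonempty
  let f : (Fin k → ℝ) → (Fin (m * k) → ℝ) := fun ω i => ω (i.modNat) / (∑ j, ω j) / m
  have hf : Measurable f := by fun_prop
  refine ⟨P.map f, Measure.isProbabilityMeasure_map hf.aemeasurable, ?_, ?_⟩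
  · have hms : MeasurableSet {b : Fin (m * k) → ℝ | (∀ i, b i ∈ Set.Icc (0 : ℝ) (1 / m)) ∧ ∑ i, b i = 1} := by
      refine measurableSet_setOfPred.2 (Measurable.and (Measurable.forall fun i => ?_) ?_)
      · exact measurableSet_setOfPred.1 (measurable_pi_apply i measurableSet_Icc)
      · exact measurableSet_setOfPred.1 (measurableSet_eq_fun (by fun_prop) measurable_const)
    rw [ae_map_iff hf.aemeasurable hms]
    filter_upwards [hpos] with ω hω
    have hS := hSpos ω hω
    refine ⟨fun i => ⟨?_, ?_⟩, ?_⟩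
    · have := hω i.modNat
      simp only [f]; positivity
    · simp only [f]
      gcongr
      rw [div_le_one hS]
      exact Finset.single_le_sum (fun j _ => (hω j).le) (Finset.mem_univ _)
    · rw [← finProdFinEquiv.sum_comp, Fintype.sum_prod_type]
      have : ∀ (x : Fin m) (y : Fin k), f ω (finProdFinEquiv (x, y)) = ω y / (∑ j, ω j) / m := by
        intro x y
        have h := congrArg Prod.snd (finProdFinEquiv.symm_apply_apply (x, y))
        change (finProdFinEquiv (x, y)).modNat = y at h
        simp only [f, h]
      simp_rw [this, ← Finset.sum_div]
      rw [Finset.sum_const, Finset.card_univ, Fintype.card_fin, nsmul_eq_mul]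
      field_simp
  · rintro i t ⟨ht0, ht1⟩
    rw [Measure.map_apply hf (measurableSet_le (measurable_pi_apply i) measurable_const)]
    rcases ht0.eq_or_lt with rfl | ht
    · rw [mul_zero, Real.zero_rpow ha.ne', ENNReal.ofReal_zero]
      rw [measure_eq_zero_iff_ae_notMem]
      filter_upwards [hpos] with ω hω
      have hS := hSpos ω hω
      have := hω i.modNat
      simp only [Set.mem_preimage, Set.mem_ofPred_eq, not_le, f]
      positivity
    · have hmt : 0 < m * t := by positivity
      have hmt1 : m * t ≤ 1 := by rw [le_div_iff₀ hm'] at ht1; linarith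
      have hc : 0 ≤ (1 - m * t) / (m * t) := div_nonneg (by linarith) hmt.le
      have h := hcdf i.modNat _ hc
      rw [show 1 / (1 + (1 - m * t) / (m * t)) = m * t by field_simp; ring] at h
      rw [← h]
      refine measure_congr ?_
      filter_upwards [hpos] with ω hω
      have hS := hSpos ω hω
      refine propext ?_
      change f ω i ≤ t ↔ (1 - m * t) / (m * t) * ω i.modNat ≤ ∑ j ∈ Finset.univ.erase i.modNat, ω j
      have hs := Finset.add_sum_erase Finset.univ ω (Finset.mem_univ i.modNat)
      simp only [f]
      rw [div_div, div_le_iff₀ (by positivity), div_mul_eq_mul_div, div_le_iff₀ hmt, ← hs]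
      constructor <;> intro h <;> nlinarith
end

section
/- Let n ≥ k ≥ 2 be integers and set β = ∑_{i=1}^n i^{k−1}. Let a_1, …, a_n be positive real numbers with a_1 + ⋯ + a_n ≤ 1, and for each i let m_i be the number of indices j ∈ {1, …, n} with j^{k−1} < β·a_i. Then ∑_{i=1}^n m_i^{k−1} ≤ β − 1. -/
/-- Let `n ≥ k ≥ 2` be integers and `β = ∑_{i=1}^n i^(k−1)`. Let `a₁, …, aₙ` be positive
reals with `∑ aᵢ ≤ 1`, and let `mᵢ` be the number of `j ∈ {1, …, n}` with `j^(k−1) < β·aᵢ`.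
Then `∑ mᵢ^(k−1) ≤ β − 1`. -/
theorem stmt_13 (n k : ℕ) (hk : 2 ≤ k) (hn : k ≤ n)
    (β : ℕ) (hβ : β = ∑ l ∈ Finset.Icc 1 n, l ^ (k - 1))
    (a : Fin n → ℝ) (ha : ∀ i, 0 < a i) (hsum : ∑ i, a i ≤ 1)
    (m : Fin n → ℕ)
    (hm : ∀ i, m i = ((Finset.Icc 1 n).filter
      (fun (j : ℕ) => (j : ℝ) ^ (k - 1) < (β : ℝ) * a i)).card) :
    ∑ i, (m i) ^ (k - 1) ≤ β - 1 := by
  have hβ1 : 0 < β := by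
    rw [hβ]
    apply Finset.sum_pos
    · intro l hl
      have := (Finset.mem_Icc.mp hl).1
      positivity
    · exact ⟨1, Finset.mem_Icc.mpr ⟨le_refl 1, by omega⟩⟩
  have hβr : (0 : ℝ) < (β : ℝ) := by exact_mod_cast hβ1
  have key : ∀ i, ((m i : ℕ) : ℝ) ^ (k - 1) < (β : ℝ) * a i := by
    intro i
    by_contra hcon
    have hcon := not_lt.mp hcon
    have hpos : 0 < m i := by
      rcases Nat.eq_zero_or_pos (m i) with h0 | h0
      · rw [h0, Nat.cast_zero, zero_pow (by omega)] at hcon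
        have := mul_pos hβr (ha i)
        linarith
      · exact h0
    have hsub : ((Finset.Icc 1 n).filter
      (fun (j : ℕ) => (j : ℝ) ^ (k - 1) < (β : ℝ) * a i)) ⊆ Finset.Icc 1 (m i - 1) := by
      intro j hj
      rw [Finset.mem_filter, Finset.mem_Icc] at hj
      have h1 : (j : ℝ) < (m i : ℝ) :=
        lt_of_pow_lt_pow_left₀ (k - 1) (Nat.cast_nonneg _) (lt_of_lt_of_le hj.2 hcon)
      have h2 : j < m i := by exact_mod_cast h1
      rw [Finset.mem_Icc]
      omega
    have hc := Finset.card_le_card hsub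
    rw [← hm i, Nat.card_Icc] at hc
    omega
  have hlt : ∑ i, ((m i : ℕ) : ℝ) ^ (k - 1) < ∑ i, (β : ℝ) * a i :=
    Finset.sum_lt_sum_of_nonempty ⟨⟨0, by omega⟩, Finset.mem_univ _⟩ (fun i _ => key i)
  rw [← Finset.mul_sum] at hlt
  have h3 : ∑ i, ((m i : ℕ) : ℝ) ^ (k - 1) < (β : ℝ) :=
    lt_of_lt_of_le hlt (mul_le_of_le_one_right hβr.le hsum)
  have h4 : ∑ i, (m i) ^ (k - 1) < β := by exact_mod_cast h3
  omega
end

section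
/- Let n ≥ k ≥ 2 be integers and set β = ∑_{i=1}^n i^{k−1}. Then there exist positive real numbers a_1, …, a_n with a_1 + ⋯ + a_n ≤ 1 such that, defining m_i as the number of indices j ∈ {1, …, n} with j^{k−1} < β·a_i, one has ∑_{i=1}^n m_i^{k−1} = β − 1. -/
/-- Let `n ≥ k ≥ 2` be integers and `β = ∑_{i=1}^n i^(k−1)`. Then there exist positive
reals `a₁, …, aₙ` with `∑ aᵢ ≤ 1` such that, with `mᵢ` the number of `j ∈ {1, …, n}`
satisfying `j^(k−1) < β·aᵢ`, one has `∑ mᵢ^(k−1) = β − 1`. -/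
theorem stmt_14 (n k : ℕ) (hk : 2 ≤ k) (hn : k ≤ n)
    (β : ℕ) (hβ : β = ∑ l ∈ Finset.Icc 1 n, l ^ (k - 1)) :
    ∃ a : Fin n → ℝ, (∀ i, 0 < a i) ∧ ∑ i, a i ≤ 1 ∧
      ∑ i, (((Finset.Icc 1 n).filter
          (fun (j : ℕ) => (j : ℝ) ^ (k - 1) < (β : ℝ) * a i)).card) ^ (k - 1)
        = β - 1 := by
  obtain ⟨p, rfl⟩ : ∃ p, k = p + 2 := ⟨k - 2, by omega⟩
  obtain ⟨N, rfl⟩ : ∃ N, n = N + 1 := ⟨n - 1, by omega⟩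
  have e : p + 2 - 1 = p + 1 := by omega
  simp only [e] at hβ ⊢
  have hN : 1 ≤ N := by omega
  have hβ' : β = 1 + ∑ i : Fin N, ((i : ℕ) + 2) ^ (p + 1) := by
    have h : ∑ l ∈ Finset.Icc 1 (N + 1), l ^ (p + 1)
        = ∑ l ∈ Finset.range (N + 1), (l + 1) ^ (p + 1) := by
      rw [Finset.range_eq_Ico, Finset.sum_Ico_add' (fun l => l ^ (p + 1)) 0 (N + 1) 1]
      rfl
    rw [hβ, h, Finset.sum_range, Fin.sum_univ_succ]
    simp [add_assoc]
  have hβR : (β : ℝ) = 1 + ∑ i : Fin N, (((i : ℕ) : ℝ) + 2) ^ (p + 1) := by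
    rw [hβ']; push_cast; rfl
  have hβpos : (0 : ℝ) < β := by
    have : 0 < β := by omega
    exact_mod_cast this
  have hNR : (1 : ℝ) ≤ N := by exact_mod_cast hN
  have hd : (0 : ℝ) < 1 / ((N : ℝ) + 1) := by positivity
  have hd1 : 1 / ((N : ℝ) + 1) < 1 := by
    rw [div_lt_one (by positivity)]; linarith
  have hd2 : ((N : ℝ) + 1) * (1 / ((N : ℝ) + 1)) = 1 := by field_simp
  generalize 1 / ((N : ℝ) + 1) = d at hd hd1 hd2
  refine ⟨Fin.cons (d / β) (fun i : Fin N => ((((i : ℕ) : ℝ) + 2) ^ (p + 1) + d) / β), ?_, ?_, ?_⟩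
  · intro i
    refine Fin.cases ?_ (fun i => ?_) i
    · simp only [Fin.cons_zero]; positivity
    · simp only [Fin.cons_succ]; positivity
  · rw [Fin.sum_univ_succ]
    simp only [Fin.cons_zero, Fin.cons_succ]
    rw [← Finset.sum_div, ← add_div, div_le_one hβpos, Finset.sum_add_distrib, hβR]
    simp only [Finset.sum_const, Finset.card_univ, Fintype.card_fin, nsmul_eq_mul]
    linarith
  · rw [Fin.sum_univ_succ]
    simp only [Fin.cons_zero, Fin.cons_succ, mul_div_cancel₀ _ hβpos.ne']
    have h0 : (Finset.Icc 1 (N + 1)).filter (fun j : ℕ => (j : ℝ) ^ (p + 1) < d) = ∅ := by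
      rw [Finset.filter_eq_empty_iff]
      intro j hj
      have h1 : (1 : ℝ) ≤ j := by exact_mod_cast (Finset.mem_Icc.1 hj).1
      have := one_le_pow₀ h1 (n := p + 1)
      linarith
    have h1 : ∀ i : Fin N, (Finset.Icc 1 (N + 1)).filter
        (fun j : ℕ => (j : ℝ) ^ (p + 1) < (((i : ℕ) : ℝ) + 2) ^ (p + 1) + d)
        = Finset.Icc 1 ((i : ℕ) + 2) := by
      intro i
      ext j
      simp only [Finset.mem_filter, Finset.mem_Icc]
      have hi := i.2
      constructor
      · rintro ⟨⟨ha, hb⟩, hc⟩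
        refine ⟨ha, ?_⟩
        by_contra hlt
        have h3 : ((i : ℕ) + 2) ^ (p + 1) < j ^ (p + 1) :=
          Nat.pow_lt_pow_left (by omega) (by omega)
        have h4 : (((i : ℕ) : ℝ) + 2) ^ (p + 1) + 1 ≤ (j : ℝ) ^ (p + 1) := by
          exact_mod_cast h3
        linarith
      · rintro ⟨ha, hb⟩
        refine ⟨⟨ha, by omega⟩, ?_⟩
        have h4 : (j : ℝ) ^ (p + 1) ≤ (((i : ℕ) : ℝ) + 2) ^ (p + 1) := by
          exact_mod_cast Nat.pow_le_pow_left hb (p + 1)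
        linarith
    simp only [h0, h1, Finset.card_empty, Nat.card_Icc, Nat.add_sub_cancel]
    rw [zero_pow (by omega), hβ']
    omega
end
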